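/- Let n ≥ 1, let 0 < δ < 2π, and let J be a smooth almost complex structure on ℝ^{2n} with J(0) = J_std. Then there exist ε > 0 and C > 0, depending only on J and δ, such that for every ρ > 0 and every smooth map u : [−ρ−1,ρ+1]×I → ℝ^{2n} with sup|u| < ε and ‖∂̄_J u‖^∧_{1,δ} < ε, there exists c ∈ ℝ^{2n} with |c| ≤ ε such that ‖(u−c)|_{[−ρ,ρ]×I}‖^∧_{3,δ} ≤ C·( ‖∂̄_J u‖^∧_{2,δ} + ‖(u−c)|_{[−ρ−1,−ρ]×I}‖₂ + ‖(u−c)|_{[ρ,ρ+1]×I}‖₂ ). (Paper's Proposition 9.1: the exponentially weighted 3-norm of u in a neck is controlled by its ends and its J-antiholomorphic derivative.) -/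

import Mathlib

open MeasureTheory Real Set Filter

noncomputable section

abbrev Cn (n : ℕ) := EuclideanSpace ℂ (Fin n)

/-- Partial derivative in the `s`-direction. -/
def pdS {E : Type*} [NormedAddCommGroup E] [NormedSpace ℝ E] (f : ℝ × ℝ → E) (p : ℝ × ℝ) : E :=
  fderiv ℝ f p (1, 0)

/-- Partial derivative in the `t`-direction. -/
def pdT {E : Type*} [NormedAddCommGroup E] [NormedSpace ℝ E] (f : ℝ × ℝ → E) (p : ℝ × ℝ) : E :=
  fderiv ℝ f p (0, 1)

/-- The standard ∂̄-operator: ∂̄f = (1/2)(∂_s f + i ∂_t f). -/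
def dbar {E : Type*} [NormedAddCommGroup E] [NormedSpace ℂ E] (f : ℝ × ℝ → E) (p : ℝ × ℝ) : E :=
  (2⁻¹ : ℝ) • (pdS f p + Complex.I • pdT f p)

/-- `cexp s t = e^{2π(s+it)}`. -/
def cexp (s t : ℝ) : ℂ :=
  Complex.exp (((2 * π * s : ℝ) : ℂ) + ((2 * π * t : ℝ) : ℂ) * Complex.I)

/-- The `m`-th Fourier coefficient of `f` at `s`. -/
def fCoef {n : ℕ} (f : ℝ × ℝ → Cn n) (m : ℤ) (s : ℝ) : Cn n :=
  ∫ t in (0:ℝ)..1, Complex.exp (-(((2 * π * (m:ℝ) * t : ℝ) : ℂ) * Complex.I)) • f (s, t)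

/-- Unweighted Sobolev `k`-norm of `f` over `U`. -/
def sobNorm {E : Type*} [NormedAddCommGroup E] [NormedSpace ℝ E] (k : ℕ)
    (f : ℝ × ℝ → E) (U : Set (ℝ × ℝ)) : ℝ :=
  Real.sqrt (∫ p in U, ∑ j ∈ Finset.range (k + 1), ‖iteratedFDeriv ℝ j f p‖ ^ 2)

/-- Weighted Sobolev `(k,δ)`-norm of `f` over `U` with weight `e^{2δ|s|}`. -/
def sobNormW {E : Type*} [NormedAddCommGroup E] [NormedSpace ℝ E] (k : ℕ) (δ : ℝ)
    (f : ℝ × ℝ → E) (U : Set (ℝ × ℝ)) : ℝ :=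
  Real.sqrt (∫ p in U,
    (∑ j ∈ Finset.range (k + 1), ‖iteratedFDeriv ℝ j f p‖ ^ 2) * Real.exp (2 * δ * |p.1|))

/-- Hat-norm: weighted Sobolev `(k,δ)`-norm with weight `e^{2δ(r−|s|)}` (big in the middle). -/
def hatNorm {E : Type*} [NormedAddCommGroup E] [NormedSpace ℝ E] (k : ℕ) (δ r : ℝ)
    (f : ℝ × ℝ → E) (U : Set (ℝ × ℝ)) : ℝ :=
  Real.sqrt (∫ p in U,
    (∑ j ∈ Finset.range (k + 1), ‖iteratedFDeriv ℝ j f p‖ ^ 2) * Real.exp (2 * δ * (r - |p.1|)))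

/-- The standard complex structure on ℝ^{2n} ≅ ℂⁿ: multiplication by `i`. -/
def Jstd (n : ℕ) : Cn n →L[ℝ] Cn n :=
  (Complex.I • ContinuousLinearMap.id ℂ (Cn n)).restrictScalars ℝ

/-- The ∂̄-operator twisted by an almost complex structure `J` on the target:
∂̄_J f = (1/2)(∂_s f + J(f) ∂_t f). -/
def dbarJ {n : ℕ} (J : Cn n → (Cn n →L[ℝ] Cn n)) (f : ℝ × ℝ → Cn n) (p : ℝ × ℝ) : Cn n :=
  (2⁻¹ : ℝ) • (pdS f p + (J (f p)) (pdT f p))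

open scoped ContDiff

def eV (a : Bool) : ℝ × ℝ := if a then (1, 0) else (0, 1)

/-- directional derivative -/
def DD {E : Type*} [NormedAddCommGroup E] [NormedSpace ℝ E] (a : Bool) (f : ℝ × ℝ → E)
    (p : ℝ × ℝ) : E := fderiv ℝ f p (eV a)

def Per {E : Type*} (f : ℝ × ℝ → E) : Prop := ∀ s t : ℝ, f (s, t + 1) = f (s, t)

section DDsec
variable {E : Type*} [NormedAddCommGroup E] [NormedSpace ℝ E]
variable {F : Type*} [NormedAddCommGroup F] [NormedSpace ℝ F]

theorem eV_norm (a : Bool) : ‖eV a‖ = 1 := by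
  cases a <;> simp [eV, Prod.norm_def]

theorem DD_smooth {f : ℝ × ℝ → E} (hf : ContDiff ℝ ∞ f) (a : Bool) : ContDiff ℝ ∞ (DD a f) := by
  have h : ContDiff ℝ ∞ (fderiv ℝ f) := hf.fderiv_right (by simp)
  exact h.clm_apply contDiff_const

theorem sm_diff {f : ℝ × ℝ → E} (hf : ContDiff ℝ ∞ f) : Differentiable ℝ f :=
  hf.differentiable (by simp)

theorem DD_per {f : ℝ × ℝ → E} (hf : Per f) (a : Bool) : Per (DD a f) := by
  intro s t
  have h : (fun p : ℝ × ℝ => f (p + (0, 1))) = f := by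
    funext p
    have := hf p.1 p.2
    simpa [Prod.add_def] using this
  have h2 := fderiv_comp_add_right (𝕜 := ℝ) (f := f) (x := (s, t)) (0, 1)
  rw [h] at h2
  simp only [DD]
  rw [h2]
  simp

theorem DD_comm {f : ℝ × ℝ → E} (hf : ContDiff ℝ ∞ f) (a b : Bool) :
    DD a (DD b f) = DD b (DD a f) := by
  funext p
  have h : Differentiable ℝ (fderiv ℝ f) :=
    (hf.fderiv_right (m := ∞) (by simp)).differentiable (by simp)
  have key : ∀ a b : Bool, DD a (DD b f) p = fderiv ℝ (fderiv ℝ f) p (eV a) (eV b) := by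
    intro a b
    simp only [DD]
    have : HasFDerivAt (fun q => fderiv ℝ f q (eV b))
        ((fderiv ℝ (fderiv ℝ f) p).flip (eV b)) p := by
      have h1 := (h p).hasFDerivAt.clm_apply (hasFDerivAt_const (eV b) p)
      simpa using h1
    change fderiv ℝ (fun q => fderiv ℝ f q (eV b)) p (eV a) = _
    rw [this.fderiv]
    rfl
  rw [key, key]
  have hs : IsSymmSndFDerivAt ℝ f p := hf.contDiffAt.isSymmSndFDerivAt (by simp; exact (show ((2 : ℕ∞) : WithTop ℕ∞) ≤ ∞ from WithTop.coe_le_coe.2 le_top))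
  exact hs (eV a) (eV b)

theorem DD_mul {f g : ℝ × ℝ → ℝ} (hf : ContDiff ℝ ∞ f) (hg : ContDiff ℝ ∞ g) (a : Bool)
    (p : ℝ × ℝ) : DD a (fun p => f p * g p) p = f p * DD a g p + DD a f p * g p := by
  simp only [DD]
  rw [fderiv_fun_mul (sm_diff hf p) (sm_diff hg p)]
  simp [mul_comm]

theorem DD_add {f g : ℝ × ℝ → E} (hf : ContDiff ℝ ∞ f) (hg : ContDiff ℝ ∞ g) (a : Bool)
    (p : ℝ × ℝ) : DD a (fun p => f p + g p) p = DD a f p + DD a g p := by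
  simp only [DD]
  rw [fderiv_fun_add (sm_diff hf p) (sm_diff hg p)]
  simp

theorem DD_sub {f g : ℝ × ℝ → E} (hf : ContDiff ℝ ∞ f) (hg : ContDiff ℝ ∞ g) (a : Bool)
    (p : ℝ × ℝ) : DD a (fun p => f p - g p) p = DD a f p - DD a g p := by
  simp only [DD]
  rw [fderiv_fun_sub (sm_diff hf p) (sm_diff hg p)]
  simp

theorem DD_sub_const (f : ℝ × ℝ → E) (c : E) (a : Bool) :
    DD a (fun p => f p - c) = DD a f := by
  funext p
  simp only [DD]
  rw [fderiv_sub_const]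

theorem DD_smul {f : ℝ × ℝ → ℝ} {g : ℝ × ℝ → E} (hf : ContDiff ℝ ∞ f) (hg : ContDiff ℝ ∞ g)
    (a : Bool) (p : ℝ × ℝ) :
    DD a (fun p => f p • g p) p = f p • DD a g p + DD a f p • g p := by
  simp only [DD]
  rw [fderiv_fun_smul (sm_diff hf p) (sm_diff hg p)]
  simp

theorem DD_clm_apply {f : ℝ × ℝ → E →L[ℝ] F} {g : ℝ × ℝ → E} (hf : ContDiff ℝ ∞ f)
    (hg : ContDiff ℝ ∞ g) (a : Bool) (p : ℝ × ℝ) :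
    DD a (fun p => f p (g p)) p = f p (DD a g p) + DD a f p (g p) := by
  simp only [DD]
  rw [fderiv_clm_apply (sm_diff hf p) (sm_diff hg p)]
  simp

theorem DD_clm (A : E →L[ℝ] F) {g : ℝ × ℝ → E}
    (hg : ContDiff ℝ ∞ g) (a : Bool) (p : ℝ × ℝ) :
    DD a (fun p => A (g p)) p = A (DD a g p) := by
  simp only [DD]
  have : HasFDerivAt (fun p => A (g p)) (A.comp (fderiv ℝ g p)) p :=
    A.hasFDerivAt.comp p (sm_diff hg p).hasFDerivAt
  rw [this.fderiv]
  simp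

theorem DD_fst {w w' : ℝ → ℝ} (h : ∀ s, HasDerivAt w (w' s) s) (a : Bool) (p : ℝ × ℝ) :
    DD a (fun p => w p.1) p = if a then w' p.1 else 0 := by
  simp only [DD]
  have h1 : HasFDerivAt (fun p : ℝ × ℝ => w p.1) _ p :=
    (h p.1).comp_hasFDerivAt p (hasFDerivAt_fst (𝕜 := ℝ) (p := p))
  rw [h1.fderiv]
  cases a <;> simp [eV]

theorem hasDerivAt_DDs {G : ℝ × ℝ → E} (hG : ContDiff ℝ ∞ G) (s t : ℝ) :
    HasDerivAt (fun s => G (s, t)) (DD true G (s, t)) s := by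
  have h := (sm_diff hG (s, t)).hasFDerivAt.comp_hasDerivAt s
    ((hasDerivAt_id s).prodMk (hasDerivAt_const s t))
  exact h

theorem hasDerivAt_DDt {G : ℝ × ℝ → E} (hG : ContDiff ℝ ∞ G) (s t : ℝ) :
    HasDerivAt (fun t => G (s, t)) (DD false G (s, t)) t := by
  have h := (sm_diff hG (s, t)).hasFDerivAt.comp_hasDerivAt t
    ((hasDerivAt_const t s).prodMk (hasDerivAt_id t))
  exact h

end DDsec

section DDinner
variable {E : Type*} [NormedAddCommGroup E] [InnerProductSpace ℝ E]

theorem DD_inner {f g : ℝ × ℝ → E} (hf : ContDiff ℝ ∞ f) (hg : ContDiff ℝ ∞ g)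
    (a : Bool) (p : ℝ × ℝ) :
    DD a (fun p => inner ℝ (f p) (g p)) p
      = inner ℝ (f p) (DD a g p) + inner ℝ (DD a f p) (g p) := by
  simp only [DD]
  rw [fderiv_inner_apply ℝ (sm_diff hf p) (sm_diff hg p)]

end DDinner

/-- Integral over the cylinder. -/
def II (R : ℝ) (G : ℝ × ℝ → ℝ) : ℝ := ∫ p in Icc (-R) R ×ˢ Icc (0:ℝ) 1, G p

theorem II_int {R : ℝ} {G : ℝ × ℝ → ℝ} (hG : Continuous G) :
    IntegrableOn G (Icc (-R) R ×ˢ Icc (0:ℝ) 1) :=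
  hG.continuousOn.integrableOn_compact (isCompact_Icc.prod isCompact_Icc)

theorem II_mono {R : ℝ} {G H : ℝ × ℝ → ℝ} (hG : Continuous G) (hH : Continuous H)
    (h : ∀ p : ℝ × ℝ, |p.1| ≤ R → G p ≤ H p) : II R G ≤ II R H := by
  refine setIntegral_mono_on (II_int hG) (II_int hH) (measurableSet_Icc.prod measurableSet_Icc) ?_
  intro p hp
  exact h p (abs_le.2 hp.1)

theorem II_add {R : ℝ} {G H : ℝ × ℝ → ℝ} (hG : Continuous G) (hH : Continuous H) :
    II R (fun p => G p + H p) = II R G + II R H :=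
  integral_add (II_int hG) (II_int hH)

theorem II_smul {R : ℝ} (c : ℝ) (G : ℝ × ℝ → ℝ) :
    II R (fun p => c * G p) = c * II R G := integral_const_mul _ _

theorem II_nonneg {R : ℝ} {G : ℝ × ℝ → ℝ} (h : ∀ p, 0 ≤ G p) : 0 ≤ II R G :=
  integral_nonneg h

theorem II_div {R : ℝ} (hR : 0 ≤ R) {G : ℝ × ℝ → ℝ} (hG : ContDiff ℝ ∞ G) (hp : Per G)
    (h0 : ∀ t, G (R, t) = 0) (h1 : ∀ t, G (-R, t) = 0) (a : Bool) : II R (DD a G) = 0 := by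
  have hc : Continuous (DD a G) := (DD_smooth hG a).continuous
  unfold II
  cases a with
  | true =>
    rw [Measure.volume_eq_prod, ← Measure.prod_restrict, integral_prod_symm]
    swap
    · rw [Measure.prod_restrict, ← Measure.volume_eq_prod]; exact II_int hc
    apply integral_eq_zero_of_ae
    filter_upwards with t
    rw [integral_Icc_eq_integral_Ioc, ← intervalIntegral.integral_of_le (by linarith)]
    have : ∀ s ∈ uIcc (-R) R, HasDerivAt (fun s => G (s, t)) (DD true G (s, t)) s := by
      intro s _
      exact hasDerivAt_DDs hG s t
    rw [intervalIntegral.integral_eq_sub_of_hasDerivAt this]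
    · simp [h0, h1]
    · exact (hc.comp (by fun_prop : Continuous fun s : ℝ => (s, t))).intervalIntegrable _ _
  | false =>
    rw [Measure.volume_eq_prod, ← Measure.prod_restrict, integral_prod]
    swap
    · rw [Measure.prod_restrict, ← Measure.volume_eq_prod]; exact II_int hc
    apply integral_eq_zero_of_ae
    filter_upwards with s
    rw [integral_Icc_eq_integral_Ioc, ← intervalIntegral.integral_of_le (by norm_num)]
    have : ∀ t ∈ uIcc (0:ℝ) 1, HasDerivAt (fun t => G (s, t)) (DD false G (s, t)) t := by
      intro t _
      exact hasDerivAt_DDt hG s t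
    rw [intervalIntegral.integral_eq_sub_of_hasDerivAt this]
    · have := hp s 0
      simp only [zero_add] at this
      simp [this]
    · exact (hc.comp (by fun_prop : Continuous fun t : ℝ => (s, t))).intervalIntegrable _ _

/-- Integrated divergence inequality. -/
theorem II_le_of_div {R : ℝ} (hR : 0 ≤ R) {G0 G1 A B : ℝ × ℝ → ℝ}
    (hG0 : ContDiff ℝ ∞ G0) (hp0 : Per G0) (hG1 : ContDiff ℝ ∞ G1) (hp1 : Per G1)
    (h00 : ∀ t, G0 (R, t) = 0) (h01 : ∀ t, G0 (-R, t) = 0)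
    (h10 : ∀ t, G1 (R, t) = 0) (h11 : ∀ t, G1 (-R, t) = 0)
    (hA : Continuous A) (hB : Continuous B)
    (h : ∀ p : ℝ × ℝ, |p.1| ≤ R → A p ≤ (DD true G0 p + DD false G1 p) + B p) :
    II R A ≤ II R B := by
  have c0 := (DD_smooth hG0 true).continuous
  have c1 := (DD_smooth hG1 false).continuous
  have := II_mono (R := R) hA ((c0.add c1).add hB) h
  have e : II R (fun p => (DD true G0 p + DD false G1 p) + B p) = II R B := by
    rw [II_add (G := fun p => DD true G0 p + DD false G1 p) (c0.add c1) hB, II_add c0 c1, II_div hR hG0 hp0 h00 h01, II_div hR hG1 hp1 h10 h11]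
    ring
  exact this.trans_eq e

section elliptic
variable {E : Type*} [NormedAddCommGroup E] [InnerProductSpace ℝ E]

def NN : ℕ → (ℝ × ℝ → E) → ℝ × ℝ → ℝ
  | 0, f, p => ‖f p‖ ^ 2
  | (j + 1), f, p => NN j (DD true f) p + NN j (DD false f) p

theorem NN_nonneg (j : ℕ) : ∀ (f : ℝ × ℝ → E) (p : ℝ × ℝ), 0 ≤ NN j f p := by
  induction j with
  | zero => intro f p; simp only [NN]; positivity
  | succ j ih => intro f p; simp only [NN]; exact add_nonneg (ih _ _) (ih _ _)

theorem NN_smooth (j : ℕ) : ∀ (f : ℝ × ℝ → E), ContDiff ℝ ∞ f → ContDiff ℝ ∞ (NN j f) := by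
  induction j with
  | zero => intro f hf; exact hf.norm_sq ℝ
  | succ j ih =>
    intro f hf
    exact (ih _ (DD_smooth hf true)).add (ih _ (DD_smooth hf false))

theorem NN_per (j : ℕ) : ∀ (f : ℝ × ℝ → E), Per f → Per (NN j f) := by
  induction j with
  | zero => intro f hf s t; simp only [NN]; rw [hf]
  | succ j ih =>
    intro f hf s t
    simp only [NN]
    rw [ih _ (DD_per hf true), ih _ (DD_per hf false)]

/-- A cutoff profile. -/
structure Prof (R : ℝ) (w w' : ℝ → ℝ) : Prop where
  sm : ContDiff ℝ ∞ w
  der : ∀ s, HasDerivAt w (w' s) s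
  z0 : w R = 0
  z1 : w (-R) = 0

theorem Prof.cont' {R : ℝ} {w w' : ℝ → ℝ} (h : Prof R w w') : Continuous w' := by
  have : w' = deriv w := by funext s; exact (h.der s).deriv.symm
  rw [this]
  exact h.sm.continuous_deriv (by simp)

theorem Prof.smp {R : ℝ} {w w' : ℝ → ℝ} (h : Prof R w w') :
    ContDiff ℝ ∞ (fun p : ℝ × ℝ => w p.1) := h.sm.comp contDiff_fst

theorem lin_est {R : ℝ} (hR : 0 ≤ R) {w w' : ℝ → ℝ} (hw : Prof R w w')
    {J0 : E →L[ℝ] E} (hJn : ∀ x, ‖J0 x‖ = ‖x‖)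
    (hJa : ∀ x y, inner ℝ (J0 x) y = - inner ℝ x (J0 y))
    {h : ℝ × ℝ → E} (hh : ContDiff ℝ ∞ h) (hp : Per h) :
    II R (fun p => w p.1 ^ 2 * NN 1 h p) ≤
      II R (fun p => 4 * (w p.1 ^ 2 * ‖DD true h p + J0 (DD false h p)‖ ^ 2)
        + 6 * (w' p.1 ^ 2 * ‖h p‖ ^ 2)) := by
  have hw1 := hw.smp
  have hc' := hw.cont'
  have hs := DD_smooth hh true
  have ht := DD_smooth hh false
  set k : ℝ × ℝ → E := fun p => w p.1 • h p with hk
  have hks : ContDiff ℝ ∞ k := hw1.smul hh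
  have hkp : Per k := fun s t => by simp only [hk]; rw [hp]
  have k0 : ∀ t, k (R, t) = 0 := fun t => by simp [hk, hw.z0]
  have k1 : ∀ t, k (-R, t) = 0 := fun t => by simp [hk, hw.z1]
  have ks := DD_smooth hks true
  have kt := DD_smooth hks false
  have kJs : ContDiff ℝ ∞ (fun p => J0 (DD true k p)) := J0.contDiff.comp ks
  have kJt : ContDiff ℝ ∞ (fun p => J0 (DD false k p)) := J0.contDiff.comp kt
  have sc : ContDiff ℝ ∞ (fun _ : ℝ × ℝ => (-2 : ℝ)) := contDiff_const
  have sc2 : ContDiff ℝ ∞ (fun _ : ℝ × ℝ => (2 : ℝ)) := contDiff_const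
  have sm0 := hks.inner ℝ kJt
  have sm1 := hks.inner ℝ kJs
  have hsc := hs.continuous
  have htc := ht.continuous
  have hhc := hh.continuous
  have hwc := hw.sm.continuous
  have hn := (NN_smooth 1 h hh).continuous
  refine II_le_of_div hR (G0 := fun p => (-2) * inner ℝ (k p) (J0 (DD false k p)))
    (G1 := fun p => 2 * inner ℝ (k p) (J0 (DD true k p))) (sc.mul sm0) ?_ (sc2.mul sm1) ?_
    ?_ ?_ ?_ ?_ ?_ ?_ ?_
  · intro s t; simp only; rw [hkp, DD_per hkp]
  · intro s t; simp only; rw [hkp, DD_per hkp]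
  · intro t; simp [k0]
  · intro t; simp [k1]
  · intro t; simp [k0]
  · intro t; simp [k1]
  · fun_prop
  · fun_prop
  · intro p _
    have zc : ∀ a c, DD a (fun _ : ℝ × ℝ => (c : ℝ)) p = 0 := by
      intro a c; simp [DD]
    rw [DD_mul sc sm0, DD_mul sc2 sm1, zc, zc, DD_inner hks kJt, DD_inner hks kJs,
      DD_clm J0 kt, DD_clm J0 ks, DD_comm hks false true]
    have e1 : DD true k p = w p.1 • DD true h p + w' p.1 • h p := by
      rw [hk, DD_smul hw1 hh, DD_fst hw.der]; simp
    have e2 : DD false k p = w p.1 • DD false h p := by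
      rw [hk, DD_smul hw1 hh, DD_fst hw.der]; simp
    have i1 : inner ℝ (DD false k p) (J0 (DD true k p)) =
        - inner ℝ (DD true k p) (J0 (DD false k p)) := by
      rw [real_inner_comm, hJa]
    rw [i1]
    simp only [NN]
    set x := DD true k p
    set y := DD false k p
    have q1 : ‖x + J0 y‖ ^ 2 = ‖x‖ ^ 2 + 2 * inner ℝ x (J0 y) + ‖y‖ ^ 2 := by
      rw [norm_add_sq_real, hJn]
    have q2 : ‖y‖ ^ 2 = w p.1 ^ 2 * ‖DD false h p‖ ^ 2 := by
      rw [e2, norm_smul, mul_pow, Real.norm_eq_abs, sq_abs]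
    have tri : ∀ a b : E, ‖a + b‖ ^ 2 ≤ 2 * ‖a‖ ^ 2 + 2 * ‖b‖ ^ 2 := by
      intro a b
      have := norm_add_le a b
      have h0 := norm_nonneg (a + b)
      nlinarith [sq_nonneg (‖a‖ - ‖b‖)]
    have sn : ∀ (c : ℝ) (a : E), ‖c • a‖ ^ 2 = c ^ 2 * ‖a‖ ^ 2 := by
      intro c a; rw [norm_smul, mul_pow, Real.norm_eq_abs, sq_abs]
    have q3 : w p.1 ^ 2 * ‖DD true h p‖ ^ 2 ≤ 2 * ‖x‖ ^ 2 + 2 * (w' p.1 ^ 2 * ‖h p‖ ^ 2) := by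
      have := tri x (-(w' p.1 • h p))
      rw [norm_neg, sn] at this
      have e : x + -(w' p.1 • h p) = w p.1 • DD true h p := by rw [e1]; abel
      rw [e, sn] at this
      exact this
    have q4 : ‖x + J0 y‖ ^ 2 ≤ 2 * (w p.1 ^ 2 * ‖DD true h p + J0 (DD false h p)‖ ^ 2)
        + 2 * (w' p.1 ^ 2 * ‖h p‖ ^ 2) := by
      have e : x + J0 y = w p.1 • (DD true h p + J0 (DD false h p)) + w' p.1 • h p := by
        rw [e1, e2, map_smul, smul_add]; abel
      rw [e]
      have := tri (w p.1 • (DD true h p + J0 (DD false h p))) (w' p.1 • h p)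
      rw [sn, sn] at this
      exact this
    have q5 : 0 ≤ ‖y‖ ^ 2 := sq_nonneg _
    nlinarith

theorem lin_est' {R : ℝ} (hR : 0 ≤ R) {w w' : ℝ → ℝ} (hw : Prof R w w')
    {J0 : E →L[ℝ] E} (hJn : ∀ x, ‖J0 x‖ = ‖x‖)
    (hJa : ∀ x y, inner ℝ (J0 x) y = - inner ℝ x (J0 y))
    {JJ : ℝ × ℝ → E →L[ℝ] E} (hJJ : ContDiff ℝ ∞ JJ)
    {κ : ℝ} (hκ : 16 * κ ^ 2 ≤ 1) (hκJ : ∀ p : ℝ × ℝ, |p.1| ≤ R → ‖JJ p - J0‖ ≤ κ)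
    {h : ℝ × ℝ → E} (hh : ContDiff ℝ ∞ h) (hp : Per h) :
    II R (fun p => w p.1 ^ 2 * NN 1 h p) ≤
      16 * II R (fun p => w p.1 ^ 2 * ‖DD true h p + JJ p (DD false h p)‖ ^ 2)
        + 12 * II R (fun p => w' p.1 ^ 2 * ‖h p‖ ^ 2) := by
  have l1 := lin_est hR hw hJn hJa hh hp
  have hc' := hw.cont'
  have hsc := (DD_smooth hh true).continuous
  have htc := (DD_smooth hh false).continuous
  have hhc := hh.continuous
  have hwc := hw.sm.continuous
  have hn := (NN_smooth 1 h hh).continuous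
  have hJc := hJJ.continuous
  have l2 : II R (fun p => 4 * (w p.1 ^ 2 * ‖DD true h p + J0 (DD false h p)‖ ^ 2)
        + 6 * (w' p.1 ^ 2 * ‖h p‖ ^ 2)) ≤
      II R (fun p => (8 * (w p.1 ^ 2 * ‖DD true h p + JJ p (DD false h p)‖ ^ 2)
        + 6 * (w' p.1 ^ 2 * ‖h p‖ ^ 2)) + (1/2) * (w p.1 ^ 2 * NN 1 h p)) := by
    refine II_mono (by fun_prop) (by fun_prop) ?_
    intro p hpR
    have hk := hκJ p hpR
    set f := DD true h p + JJ p (DD false h p)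
    have e : DD true h p + J0 (DD false h p) = f - (JJ p - J0) (DD false h p) := by
      simp [f]; abel
    have b1 : ‖(JJ p - J0) (DD false h p)‖ ≤ κ * ‖DD false h p‖ :=
      ((JJ p - J0).le_opNorm _).trans (by gcongr)
    have b2 := norm_sub_le f ((JJ p - J0) (DD false h p))
    have b3 : ‖DD true h p + J0 (DD false h p)‖ ≤ ‖f‖ + κ * ‖DD false h p‖ := by
      rw [e]; linarith
    have b4 : ‖DD true h p + J0 (DD false h p)‖ ^ 2 ≤ (‖f‖ + κ * ‖DD false h p‖) ^ 2 := by
      gcongr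
    have b5 : ‖DD true h p + J0 (DD false h p)‖ ^ 2 ≤ 2 * ‖f‖ ^ 2 + (1/8) * NN 1 h p := by
      simp only [NN]
      nlinarith [sq_nonneg (‖f‖ - κ * ‖DD false h p‖), sq_nonneg ‖DD true h p‖,
        mul_le_mul_of_nonneg_right hκ (sq_nonneg ‖DD false h p‖)]
    have b6 := mul_le_mul_of_nonneg_left b5 (sq_nonneg (w p.1))
    nlinarith
  have l3 := l1.trans l2
  rw [II_add (by fun_prop) (by fun_prop), II_add (by fun_prop) (by fun_prop), II_smul, II_smul,
    II_smul] at l3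
  linarith

end elliptic

section gn
variable {E : Type*} [NormedAddCommGroup E] [InnerProductSpace ℝ E]

theorem DD_pow {f : ℝ × ℝ → ℝ} (hf : ContDiff ℝ ∞ f) (k : ℕ) (a : Bool)
    (p : ℝ × ℝ) : DD a (fun p => f p ^ (k + 1)) p = (k + 1) * f p ^ k * DD a f p := by
  simp only [DD]
  rw [fderiv_fun_pow _ (sm_diff hf p)]
  simp

theorem DD_NN1 {f : ℝ × ℝ → E} (hf : ContDiff ℝ ∞ f) (a : Bool) (p : ℝ × ℝ) :
    DD a (NN 1 f) p = 2 * (inner ℝ (DD true f p) (DD a (DD true f) p)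
      + inner ℝ (DD false f p) (DD a (DD false f) p)) := by
  have h1 := DD_smooth hf true
  have h2 := DD_smooth hf false
  have : NN 1 f = fun p => inner ℝ (DD true f p) (DD true f p)
      + inner ℝ (DD false f p) (DD false f p) := by
    funext p; simp [NN]
  rw [this, DD_add (h1.inner ℝ h1) (h2.inner ℝ h2), DD_inner h1 h1, DD_inner h2 h2,
    real_inner_comm (DD true f p) (DD a (DD true f) p),
    real_inner_comm (DD false f p) (DD a (DD false f) p)]
  ring

theorem DD_sqprof {R : ℝ} {w w' : ℝ → ℝ} (hw : Prof R w w') (a : Bool) (p : ℝ × ℝ) :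
    DD a (fun p => w p.1 ^ 2) p = if a then 2 * w p.1 * w' p.1 else 0 := by
  have := DD_pow hw.smp 1 a p
  simp only [Nat.reduceAdd] at this
  rw [this, DD_fst hw.der]
  cases a
  · simp
  · simp only [if_true]; push_cast; ring

theorem le_sqrt_NN1 (f : ℝ × ℝ → E) (a : Bool) (p : ℝ × ℝ) :
    ‖DD a f p‖ ≤ √(NN 1 f p) := by
  apply Real.le_sqrt_of_sq_le
  simp only [NN]
  cases a
  · nlinarith [sq_nonneg ‖DD true f p‖]
  · nlinarith [sq_nonneg ‖DD false f p‖]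

theorem le_sqrt_NN2 (f : ℝ × ℝ → E) (a b : Bool) (p : ℝ × ℝ) :
    ‖DD a (DD b f) p‖ ≤ √(NN 2 f p) := by
  refine (le_sqrt_NN1 (DD b f) a p).trans (Real.sqrt_le_sqrt ?_)
  change _ ≤ NN 1 (DD true f) p + NN 1 (DD false f) p
  cases b
  · linarith [NN_nonneg 1 (DD true f) p]
  · linarith [NN_nonneg 1 (DD false f) p]

theorem le_sqrt_NN3 (f : ℝ × ℝ → E) (a b c : Bool) (p : ℝ × ℝ) :
    ‖DD a (DD b (DD c f)) p‖ ≤ √(NN 3 f p) := by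
  refine (le_sqrt_NN2 (DD c f) a b p).trans (Real.sqrt_le_sqrt ?_)
  change _ ≤ NN 2 (DD true f) p + NN 2 (DD false f) p
  cases c
  · linarith [NN_nonneg 2 (DD true f) p]
  · linarith [NN_nonneg 2 (DD false f) p]

theorem inner_bd {x y : E} {a b : ℝ} (hx : ‖x‖ ≤ a) (hy : ‖y‖ ≤ b) :
    |(inner ℝ x y : ℝ)| ≤ a * b :=
  (abs_real_inner_le_norm x y).trans
    (mul_le_mul hx hy (norm_nonneg _) ((norm_nonneg _).trans hx))

theorem gn_est {R : ℝ} (hR : 0 ≤ R) {w w' : ℝ → ℝ} (hw : Prof R w w') (k : ℕ)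
    {e : ℝ} {u : ℝ × ℝ → E} (hu : ContDiff ℝ ∞ u) (hp : Per u)
    (hue : ∀ p : ℝ × ℝ, |p.1| ≤ R → ‖u p‖ ≤ e) :
    II R (fun p => w p.1 ^ 2 * NN 1 u p ^ (k + 2)) ≤
      2 * (10 + 8 * k) ^ 2 * e ^ 2 * II R (fun p => w p.1 ^ 2 * (NN 1 u p ^ k * NN 2 u p))
      + 8 * e ^ 2 * II R (fun p => w' p.1 ^ 2 * NN 1 u p ^ (k + 1)) := by
  have hwc := hw.sm.continuous
  have hc' := hw.cont'
  have hn1 := NN_smooth 1 u hu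
  have hn1c := hn1.continuous
  have hn2c := (NN_smooth 2 u hu).continuous
  have hw2 : ContDiff ℝ ∞ (fun p : ℝ × ℝ => w p.1 ^ 2) := hw.smp.pow 2
  have hP : ContDiff ℝ ∞ (fun p => NN 1 u p ^ (k + 1)) := hn1.pow (k + 1)
  have hi : ∀ a, ContDiff ℝ ∞ (fun p => (inner ℝ (u p) (DD a u p) : ℝ)) :=
    fun a => hu.inner ℝ (DD_smooth hu a)
  have hG : ∀ a, ContDiff ℝ ∞ (fun p => (w p.1 ^ 2 * NN 1 u p ^ (k + 1)) * inner ℝ (u p) (DD a u p)) :=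
    fun a => (hw2.mul hP).mul (hi a)
  have hGp : ∀ a, Per (fun p => (w p.1 ^ 2 * NN 1 u p ^ (k + 1)) * inner ℝ (u p) (DD a u p)) := by
    intro a s t
    simp only
    rw [NN_per 1 u hp, hp, DD_per hp]
  have key : II R (fun p => (1/2) * (w p.1 ^ 2 * NN 1 u p ^ (k + 2))) ≤
      II R (fun p => ((10 + 8 * k) ^ 2 * e ^ 2) * (w p.1 ^ 2 * (NN 1 u p ^ k * NN 2 u p))
        + (4 * e ^ 2) * (w' p.1 ^ 2 * NN 1 u p ^ (k + 1))) := by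
    refine II_le_of_div hR (hG true) (hGp true) (hG false) (hGp false) ?_ ?_ ?_ ?_ ?_ ?_ ?_
    · intro t; simp [hw.z0]
    · intro t; simp [hw.z1]
    · intro t; simp [hw.z0]
    · intro t; simp [hw.z1]
    · fun_prop
    · fun_prop
    · intro p hpR
      rw [DD_mul (hw2.mul hP) (hi true), DD_mul (hw2.mul hP) (hi false),
        DD_mul hw2 hP, DD_mul hw2 hP, DD_sqprof hw, DD_sqprof hw, DD_pow hn1, DD_pow hn1,
        DD_inner hu (DD_smooth hu true), DD_inner hu (DD_smooth hu false),
        DD_NN1 hu, DD_NN1 hu]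
      have hPeq : NN 1 u p = inner ℝ (DD true u p) (DD true u p)
          + inner ℝ (DD false u p) (DD false u p) := by simp [NN]
      have hP0 := NN_nonneg 1 u p
      have hM0 := NN_nonneg 2 u p
      have hr := Real.sq_sqrt hP0
      have hm := Real.sq_sqrt hM0
      have hr0 := Real.sqrt_nonneg (NN 1 u p)
      have hm0 := Real.sqrt_nonneg (NN 2 u p)
      have hx := fun a => le_sqrt_NN1 u a p
      have hy := fun a b => le_sqrt_NN2 u a b p
      have he := hue p hpR
      have he0 : 0 ≤ e := (norm_nonneg _).trans he
      have b1 := abs_le.1 (inner_bd he (hx true))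
      have b2 := abs_le.1 (inner_bd he (hx false))
      have c1 := abs_le.1 (inner_bd he (hy true true))
      have c2 := abs_le.1 (inner_bd he (hy false false))
      have d1 := inner_bd (hx true) (hy true true)
      have d2 := inner_bd (hx false) (hy true false)
      have d3 := inner_bd (hx true) (hy false true)
      have d4 := inner_bd (hx false) (hy false false)
      have b1' := inner_bd he (hx true)
      have b2' := inner_bd he (hx false)
      generalize √(NN 1 u p) = r at *
      generalize √(NN 2 u p) = m at *
      generalize w p.1 = om at *
      generalize w' p.1 = om' at *
      generalize (inner ℝ (u p) (DD true u p) : ℝ) = i1 at *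
      generalize (inner ℝ (u p) (DD false u p) : ℝ) = i2 at *
      generalize (inner ℝ (u p) (DD true (DD true u) p) : ℝ) = j1 at *
      generalize (inner ℝ (u p) (DD false (DD false u) p) : ℝ) = j2 at *
      generalize (inner ℝ (DD true u p) (DD true (DD true u) p) : ℝ) = l1 at *
      generalize (inner ℝ (DD false u p) (DD true (DD false u) p) : ℝ) = l2 at *
      generalize (inner ℝ (DD true u p) (DD false (DD true u) p) : ℝ) = l3 at *
      generalize (inner ℝ (DD false u p) (DD false (DD false u) p) : ℝ) = l4 at *
      generalize (inner ℝ (DD true u p) (DD true u p) : ℝ) = q1 at *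
      generalize (inner ℝ (DD false u p) (DD false u p) : ℝ) = q2 at *
      generalize NN 1 u p = P at *
      generalize NN 2 u p = M at *
      have hk0 : (0:ℝ) ≤ k := Nat.cast_nonneg k
      have hPk : 0 ≤ P ^ k := pow_nonneg hP0 k
      -- reduce to inequality without the power
      have f1 : |(2 * (l1 + l2)) * i1| ≤ (4 * r * m) * (e * r) := by
        rw [abs_mul]
        refine mul_le_mul ?_ b1' (abs_nonneg _) (by positivity)
        rw [abs_mul, abs_two]
        have := abs_add_le l1 l2
        nlinarith
      have f2 : |(2 * (l3 + l4)) * i2| ≤ (4 * r * m) * (e * r) := by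
        rw [abs_mul]
        refine mul_le_mul ?_ b2' (abs_nonneg _) (by positivity)
        rw [abs_mul, abs_two]
        have := abs_add_le l3 l4
        nlinarith
      have g1 : (4 * r * m) * (e * r) = 4 * e * P * m := by rw [← hr]; ring
      rw [g1] at f1 f2
      have g2 : -(2 * om * om' * i1) ≤ 2 * (|om| * |om'|) * (e * r) := by
        have := neg_abs_le (2 * om * om' * i1)
        rw [abs_mul, abs_mul, abs_mul, abs_two] at this
        have h3 : 2 * |om| * |om'| * |i1| ≤ 2 * |om| * |om'| * (e * r) := by gcongr
        linarith
      have y1 : (10 + 8 * k) * e * P * m ≤ (1/4) * P ^ 2 + (10 + 8 * k) ^ 2 * e ^ 2 * M := by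
        rw [← hm]
        nlinarith [sq_nonneg ((1/2) * P - (10 + 8 * k) * e * m)]
      have y2 : 2 * (|om| * |om'|) * (e * r) * P ≤ (1/4) * om ^ 2 * P ^ 2 + 4 * e ^ 2 * om' ^ 2 * P := by
        rw [← sq_abs om, ← sq_abs om']
        have e1 : 4 * e ^ 2 * |om'| ^ 2 * P = (2 * e * |om'| * r) ^ 2 := by rw [← hr]; ring
        rw [e1]
        nlinarith [sq_nonneg ((1/2) * |om| * P - 2 * e * |om'| * r)]
      have main : (1/2) * (om ^ 2 * P ^ 2) ≤
          (om ^ 2 * P * (j1 + q1) + (om ^ 2 * ((k + 1) * (2 * (l1 + l2))) + 2 * om * om' * P) * i1)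
          + (om ^ 2 * P * (j2 + q2) + (om ^ 2 * ((k + 1) * (2 * (l3 + l4)))) * i2)
          + (10 + 8 * k) ^ 2 * e ^ 2 * (om ^ 2 * M) + 4 * e ^ 2 * (om' ^ 2 * P) := by
        have z1 : om ^ 2 * P * (-(2 * e * m)) ≤ om ^ 2 * P * (j1 + j2) := by
          apply mul_le_mul_of_nonneg_left _ (by positivity)
          linarith [c1.1, c2.1]
        have z2 : om ^ 2 * (k + 1) * (-(8 * e * P * m)) ≤
            om ^ 2 * (k + 1) * ((2 * (l1 + l2)) * i1 + (2 * (l3 + l4)) * i2) := by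
          apply mul_le_mul_of_nonneg_left _ (by positivity)
          linarith [(abs_le.1 f1).1, (abs_le.1 f2).1]
        have z3 := mul_le_mul_of_nonneg_right g2 hP0
        have z4 := mul_le_mul_of_nonneg_left y1 (sq_nonneg om)
        have z5 : om ^ 2 * P * (q1 + q2) = om ^ 2 * P ^ 2 := by rw [← hPeq]; ring
        linarith
      have := mul_le_mul_of_nonneg_left main hPk
      simp only [if_true]
      refine le_trans (le_of_eq ?_) (this.trans (le_of_eq ?_))
      · ring
      · simp only [Bool.false_eq_true, if_false]
        ring
  rw [II_smul, II_add (by fun_prop) (by fun_prop), II_smul, II_smul] at key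
  linarith

theorem gn_est2 {R : ℝ} (hR : 0 ≤ R) {w w' : ℝ → ℝ} (hw : Prof R w w')
    {μ : ℝ} (hμ : 0 < μ) {u : ℝ × ℝ → E} (hu : ContDiff ℝ ∞ u) (hp : Per u) :
    II R (fun p => w p.1 ^ 2 * (NN 1 u p * NN 2 u p)) ≤
      2 * μ⁻¹ * II R (fun p => w p.1 ^ 2 * NN 1 u p ^ 3)
      + 8 * μ * II R (fun p => w p.1 ^ 2 * NN 3 u p)
      + 16 * II R (fun p => w' p.1 ^ 2 * NN 1 u p ^ 2) := by
  have hwc := hw.sm.continuous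
  have hc' := hw.cont'
  have hn1 := NN_smooth 1 u hu
  have hn1c := hn1.continuous
  have hn2c := (NN_smooth 2 u hu).continuous
  have hn3c := (NN_smooth 3 u hu).continuous
  have hw2 : ContDiff ℝ ∞ (fun p : ℝ × ℝ => w p.1 ^ 2) := hw.smp.pow 2
  have hd := fun a => DD_smooth hu a
  have hi : ∀ a b, ContDiff ℝ ∞ (fun p => (inner ℝ (DD b u p) (DD a (DD b u) p) : ℝ)) :=
    fun a b => (hd b).inner ℝ (DD_smooth (hd b) a)
  have hQ : ∀ a, ContDiff ℝ ∞ (fun p => (inner ℝ (DD true u p) (DD a (DD true u) p) : ℝ)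
      + inner ℝ (DD false u p) (DD a (DD false u) p)) := fun a => (hi a true).add (hi a false)
  have hG : ∀ a, ContDiff ℝ ∞ (fun p => (w p.1 ^ 2 * NN 1 u p) *
      ((inner ℝ (DD true u p) (DD a (DD true u) p) : ℝ)
      + inner ℝ (DD false u p) (DD a (DD false u) p))) :=
    fun a => (hw2.mul hn1).mul (hQ a)
  have hGp : ∀ a, Per (fun p => (w p.1 ^ 2 * NN 1 u p) *
      ((inner ℝ (DD true u p) (DD a (DD true u) p) : ℝ)
      + inner ℝ (DD false u p) (DD a (DD false u) p))) := by
    intro a s t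
    simp only
    rw [NN_per 1 u hp, DD_per hp, DD_per hp, DD_per (DD_per hp _), DD_per (DD_per hp _)]
  have key : II R (fun p => (1/2) * (w p.1 ^ 2 * (NN 1 u p * NN 2 u p))) ≤
      II R (fun p => (μ⁻¹ * (w p.1 ^ 2 * NN 1 u p ^ 3)
        + (4 * μ) * (w p.1 ^ 2 * NN 3 u p)) + 8 * (w' p.1 ^ 2 * NN 1 u p ^ 2)) := by
    refine II_le_of_div hR (hG true) (hGp true) (hG false) (hGp false) ?_ ?_ ?_ ?_ ?_ ?_ ?_
    · intro t; simp [hw.z0]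
    · intro t; simp [hw.z1]
    · intro t; simp [hw.z0]
    · intro t; simp [hw.z1]
    · fun_prop
    · fun_prop
    · intro p hpR
      rw [DD_mul (hw2.mul hn1) (hQ true), DD_mul (hw2.mul hn1) (hQ false),
        DD_mul hw2 hn1, DD_mul hw2 hn1, DD_sqprof hw, DD_sqprof hw,
        DD_add (hi _ _) (hi _ _), DD_add (hi _ _) (hi _ _),
        DD_inner (hd _) (DD_smooth (hd _) _), DD_inner (hd _) (DD_smooth (hd _) _),
        DD_inner (hd _) (DD_smooth (hd _) _), DD_inner (hd _) (DD_smooth (hd _) _),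
        DD_NN1 hu, DD_NN1 hu]
      have hMeq : NN 2 u p = inner ℝ (DD true (DD true u) p) (DD true (DD true u) p)
          + inner ℝ (DD false (DD true u) p) (DD false (DD true u) p)
          + (inner ℝ (DD true (DD false u) p) (DD true (DD false u) p)
          + inner ℝ (DD false (DD false u) p) (DD false (DD false u) p)) := by simp [NN]
      have hP0 := NN_nonneg 1 u p
      have hM0 := NN_nonneg 2 u p
      have hN0 := NN_nonneg 3 u p
      have hr := Real.sq_sqrt hP0
      have hm := Real.sq_sqrt hM0
      have hn := Real.sq_sqrt hN0
      have hr0 := Real.sqrt_nonneg (NN 1 u p)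
      have hm0 := Real.sqrt_nonneg (NN 2 u p)
      have hn0 := Real.sqrt_nonneg (NN 3 u p)
      have hx := fun a => le_sqrt_NN1 u a p
      have hy := fun a b => le_sqrt_NN2 u a b p
      have hz := fun a b c => le_sqrt_NN3 u a b c p
      have d1 := inner_bd (hx true) (hy true true)
      have d2 := inner_bd (hx false) (hy true false)
      have k1 := abs_le.1 (inner_bd (hx true) (hz true true true))
      have k2 := abs_le.1 (inner_bd (hx false) (hz true true false))
      have k3 := abs_le.1 (inner_bd (hx true) (hz false false true))
      have k4 := abs_le.1 (inner_bd (hx false) (hz false false false))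
      generalize √(NN 1 u p) = r at *
      generalize √(NN 2 u p) = m at *
      generalize √(NN 3 u p) = n at *
      generalize w p.1 = om at *
      generalize w' p.1 = om' at *
      generalize (inner ℝ (DD true u p) (DD true (DD true u) p) : ℝ) = l1 at *
      generalize (inner ℝ (DD false u p) (DD true (DD false u) p) : ℝ) = l2 at *
      generalize (inner ℝ (DD true u p) (DD false (DD true u) p) : ℝ) = l3 at *
      generalize (inner ℝ (DD false u p) (DD false (DD false u) p) : ℝ) = l4 at *
      generalize (inner ℝ (DD true u p) (DD true (DD true (DD true u)) p) : ℝ) = j1 at *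
      generalize (inner ℝ (DD false u p) (DD true (DD true (DD false u)) p) : ℝ) = j2 at *
      generalize (inner ℝ (DD true u p) (DD false (DD false (DD true u)) p) : ℝ) = j3 at *
      generalize (inner ℝ (DD false u p) (DD false (DD false (DD false u)) p) : ℝ) = j4 at *
      generalize (inner ℝ (DD true (DD true u) p) (DD true (DD true u) p) : ℝ) = q1 at *
      generalize (inner ℝ (DD false (DD true u) p) (DD false (DD true u) p) : ℝ) = q2 at *
      generalize (inner ℝ (DD true (DD false u) p) (DD true (DD false u) p) : ℝ) = q3 at *
      generalize (inner ℝ (DD false (DD false u) p) (DD false (DD false u) p) : ℝ) = q4 at *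
      generalize NN 1 u p = P at *
      generalize NN 2 u p = M at *
      generalize NN 3 u p = N at *
      have f1 : |l1 + l2| ≤ 2 * (r * m) := by
        have := abs_add_le l1 l2
        linarith
      have g2 : -(2 * om * om' * (l1 + l2)) ≤ 4 * (|om| * |om'|) * (r * m) := by
        have := neg_abs_le (2 * om * om' * (l1 + l2))
        rw [abs_mul, abs_mul, abs_mul, abs_two] at this
        have h3 : 2 * |om| * |om'| * |l1 + l2| ≤ 2 * |om| * |om'| * (2 * (r * m)) := by gcongr
        linarith
      have y1 : 4 * (r * n) * P ≤ μ⁻¹ * P ^ 3 + 4 * μ * N := by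
        have e1 : P ^ 3 = (r * P) ^ 2 := by rw [mul_pow, hr]; ring
        rw [e1, ← hn]
        have h5 : μ⁻¹ * (r * P) ^ 2 + 4 * μ * n ^ 2 - 4 * (r * n) * P
          = μ⁻¹ * (r * P - 2 * μ * n) ^ 2 := by field_simp; ring
        have h6 : 0 ≤ μ⁻¹ * (r * P - 2 * μ * n) ^ 2 := by positivity
        linarith
      have y2 : 4 * (|om| * |om'|) * (r * m) * P ≤ (1/2) * om ^ 2 * (P * M) + 8 * om' ^ 2 * P ^ 2 := by
        rw [← sq_abs om, ← sq_abs om']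
        have e1 : P * M = (r * m) ^ 2 := by rw [mul_pow, hr, hm]
        rw [e1]
        nlinarith [sq_nonneg (|om| * (r * m) - 4 * |om'| * P)]
      have z1 : om ^ 2 * P * (-(4 * (r * n))) ≤ om ^ 2 * P * (j1 + j2 + j3 + j4) := by
        apply mul_le_mul_of_nonneg_left _ (by positivity)
        linarith [k1.1, k2.1, k3.1, k4.1]
      have z3 := mul_le_mul_of_nonneg_right g2 hP0
      have z4 := mul_le_mul_of_nonneg_left y1 (sq_nonneg om)
      have z5 : om ^ 2 * P * (q1 + q2 + (q3 + q4)) = om ^ 2 * (P * M) := by rw [← hMeq]; ring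
      have z6 : 0 ≤ om ^ 2 * (2 * (l1 + l2) ^ 2) := by positivity
      have z7 : 0 ≤ om ^ 2 * (2 * (l3 + l4) ^ 2) := by positivity
      simp only [if_true, Bool.false_eq_true, if_false]
      nlinarith
  rw [II_smul, II_add (by fun_prop) (by fun_prop), II_add (by fun_prop) (by fun_prop),
    II_smul, II_smul, II_smul] at key
  linarith

end gn

section nonlin
variable {E : Type*} [NormedAddCommGroup E] [InnerProductSpace ℝ E]

/-- Cauchy-Riemann type operator with variable coefficients. -/
def CR (JJ : ℝ × ℝ → E →L[ℝ] E) (h : ℝ × ℝ → E) (p : ℝ × ℝ) : E :=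
  DD true h p + JJ p (DD false h p)

structure Sys (R e L κ : ℝ) (J0 : E →L[ℝ] E) (JJ : ℝ × ℝ → E →L[ℝ] E) (u : ℝ × ℝ → E) : Prop where
  hR : 0 ≤ R
  Jn : ∀ x, ‖J0 x‖ = ‖x‖
  Ja : ∀ x y, inner ℝ (J0 x) y = - inner ℝ x (J0 y)
  us : ContDiff ℝ ∞ u
  up : Per u
  Js : ContDiff ℝ ∞ JJ
  ue : ∀ p : ℝ × ℝ, |p.1| ≤ R → ‖u p‖ ≤ e
  hκ : 16 * κ ^ 2 ≤ 1
  Jκ : ∀ p : ℝ × ℝ, |p.1| ≤ R → ‖JJ p - J0‖ ≤ κ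
  J1 : ∀ (p : ℝ × ℝ) (a : Bool), |p.1| ≤ R → ‖DD a JJ p‖ ≤ L * √(NN 1 u p)
  J2 : ∀ (p : ℝ × ℝ) (a b : Bool), |p.1| ≤ R →
    ‖DD a (DD b JJ) p‖ ≤ L * (NN 1 u p + √(NN 2 u p))
  L0 : 0 ≤ L
  e0 : 0 < e
  e1 : e ≤ 1
  Le : 20000000000 * L ^ 2 * e ^ 2 ≤ 1

theorem CR_smooth {JJ : ℝ × ℝ → E →L[ℝ] E} {h : ℝ × ℝ → E} (hJ : ContDiff ℝ ∞ JJ)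
    (hh : ContDiff ℝ ∞ h) : ContDiff ℝ ∞ (CR JJ h) :=
  (DD_smooth hh true).add (hJ.clm_apply (DD_smooth hh false))

theorem CR_comm {JJ : ℝ × ℝ → E →L[ℝ] E} {h : ℝ × ℝ → E} (hJ : ContDiff ℝ ∞ JJ)
    (hh : ContDiff ℝ ∞ h) (a : Bool) (p : ℝ × ℝ) :
    DD a (CR JJ h) p = CR JJ (DD a h) p + DD a JJ p (DD false h p) := by
  have h1 := DD_smooth hh true
  have h2 := DD_smooth hh false
  have : CR JJ h = fun p => DD true h p + JJ p (DD false h p) := rfl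
  rw [this, DD_add h1 (hJ.clm_apply h2), DD_clm_apply hJ h2, DD_comm hh a true,
    DD_comm hh a false]
  simp only [CR]
  abel

variable {R e L κ : ℝ} {J0 : E →L[ℝ] E} {JJ : ℝ × ℝ → E →L[ℝ] E} {u : ℝ × ℝ → E}
  {w w' w'' : ℝ → ℝ}

theorem level0 (S : Sys R e L κ J0 JJ u) (hw : Prof R w w') :
    II R (fun p => w p.1 ^ 2 * NN 1 u p) ≤
      16 * II R (fun p => w p.1 ^ 2 * NN 0 (CR JJ u) p)
      + 12 * II R (fun p => w' p.1 ^ 2 * NN 0 u p) :=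
  lin_est' S.hR hw S.Jn S.Ja S.Js S.hκ S.Jκ S.us S.up

theorem sq_le_two {x y z : ℝ} (hx : 0 ≤ x) (h : x ≤ y + z) : x ^ 2 ≤ 2 * y ^ 2 + 2 * z ^ 2 := by
  nlinarith [sq_nonneg (y - z)]

theorem level1 (S : Sys R e L κ J0 JJ u) (hw : Prof R w w') :
    II R (fun p => w p.1 ^ 2 * NN 2 u p) ≤
      64 * II R (fun p => w p.1 ^ 2 * NN 1 (CR JJ u) p)
      + 25 * II R (fun p => w' p.1 ^ 2 * NN 1 u p) := by
  have hf := CR_smooth S.Js S.us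
  have hwc := hw.sm.continuous
  have hc' := hw.cont'
  have n1 := (NN_smooth 1 u S.us).continuous
  have n2 := (NN_smooth 2 u S.us).continuous
  have f1 := (NN_smooth 1 _ hf).continuous
  have step : ∀ a, II R (fun p => w p.1 ^ 2 * NN 1 (DD a u) p) ≤
      16 * II R (fun p => 2 * (w p.1 ^ 2 * NN 0 (DD a (CR JJ u)) p)
        + (2 * L ^ 2) * (w p.1 ^ 2 * NN 1 u p ^ 2))
      + 12 * II R (fun p => w' p.1 ^ 2 * NN 0 (DD a u) p) := by
    intro a
    have hd := DD_smooth S.us a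
    have f0 := (NN_smooth 0 _ (DD_smooth hf a)).continuous
    have cc := (CR_smooth S.Js hd).continuous
    refine (lin_est' S.hR hw S.Jn S.Ja S.Js S.hκ S.Jκ hd (DD_per S.up a)).trans ?_
    have : II R (fun p => w p.1 ^ 2 * ‖CR JJ (DD a u) p‖ ^ 2) ≤
        II R (fun p => 2 * (w p.1 ^ 2 * NN 0 (DD a (CR JJ u)) p)
        + (2 * L ^ 2) * (w p.1 ^ 2 * NN 1 u p ^ 2)) := by
      refine II_mono (by fun_prop) (by fun_prop) ?_
      intro p hp
      have e1 := CR_comm S.Js S.us a p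
      have e2 : CR JJ (DD a u) p = DD a (CR JJ u) p - DD a JJ p (DD false u p) := by
        rw [e1]; abel
      have hP0 := NN_nonneg 1 u p
      have hr := Real.sq_sqrt hP0
      have b1 : ‖DD a JJ p (DD false u p)‖ ≤ (L * √(NN 1 u p)) * √(NN 1 u p) :=
        ((DD a JJ p).le_opNorm _).trans (mul_le_mul (S.J1 p a hp) (le_sqrt_NN1 u false p)
          (norm_nonneg _) (mul_nonneg S.L0 (Real.sqrt_nonneg _)))
      have b2 : ‖CR JJ (DD a u) p‖ ≤ ‖DD a (CR JJ u) p‖ + L * NN 1 u p := by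
        rw [e2]
        refine (norm_sub_le _ _).trans ?_
        have : (L * √(NN 1 u p)) * √(NN 1 u p) = L * NN 1 u p := by
          conv_rhs => rw [← hr]
          ring
        linarith
      have b3 := sq_le_two (norm_nonneg _) b2
      have b4 := mul_le_mul_of_nonneg_left b3 (sq_nonneg (w p.1))
      simp only [NN] at *
      linarith
    simp only [CR] at this ⊢
    simp only [NN] at this ⊢
    linarith
  have s1 := step true
  have s2 := step false
  have cA : ∀ a, Continuous (fun p => w p.1 ^ 2 * NN 1 (DD a u) p) := fun a => by
    have := (NN_smooth 1 _ (DD_smooth S.us a)).continuous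
    fun_prop
  have cB : ∀ a, Continuous (fun p => w p.1 ^ 2 * NN 0 (DD a (CR JJ u)) p) := fun a => by
    have := (NN_smooth 0 _ (DD_smooth hf a)).continuous
    fun_prop
  have cC : ∀ a, Continuous (fun p => w' p.1 ^ 2 * NN 0 (DD a u) p) := fun a => by
    have := (NN_smooth 0 _ (DD_smooth S.us a)).continuous
    fun_prop
  have tA : II R (fun p => w p.1 ^ 2 * NN 2 u p) = II R (fun p => w p.1 ^ 2 * NN 1 (DD true u) p)
      + II R (fun p => w p.1 ^ 2 * NN 1 (DD false u) p) := by
    rw [← II_add (cA _) (cA _)]; congr 1; funext p; rw [← mul_add]; rfl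
  have tB : II R (fun p => w p.1 ^ 2 * NN 1 (CR JJ u) p)
      = II R (fun p => w p.1 ^ 2 * NN 0 (DD true (CR JJ u)) p)
      + II R (fun p => w p.1 ^ 2 * NN 0 (DD false (CR JJ u)) p) := by
    rw [← II_add (cB _) (cB _)]; congr 1; funext p; rw [← mul_add]; rfl
  have tC : II R (fun p => w' p.1 ^ 2 * NN 1 u p)
      = II R (fun p => w' p.1 ^ 2 * NN 0 (DD true u) p)
      + II R (fun p => w' p.1 ^ 2 * NN 0 (DD false u) p) := by
    rw [← II_add (cC _) (cC _)]; congr 1; funext p; rw [← mul_add]; rfl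
  have g := gn_est S.hR hw 0 S.us S.up S.ue
  have cQ : Continuous (fun p => w p.1 ^ 2 * NN 1 u p ^ 2) := by fun_prop
  rw [II_add ((cB true).const_mul 2) (cQ.const_mul _), II_smul, II_smul] at s1
  rw [II_add ((cB false).const_mul 2) (cQ.const_mul _), II_smul, II_smul] at s2
  simp only [pow_zero, one_mul, zero_add, pow_one, Nat.cast_zero, mul_zero, add_zero] at g
  rw [tA] at g ⊢
  rw [tB]
  rw [tC] at g ⊢
  have p1 : 0 ≤ II R (fun p => w p.1 ^ 2 * NN 1 (DD true u) p)
      + II R (fun p => w p.1 ^ 2 * NN 1 (DD false u) p) := by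
    rw [← tA]; exact II_nonneg fun p => mul_nonneg (sq_nonneg _) (NN_nonneg _ _ _)
  have p2 : 0 ≤ II R (fun p => w' p.1 ^ 2 * NN 0 (DD true u) p)
      + II R (fun p => w' p.1 ^ 2 * NN 0 (DD false u) p) := by
    rw [← tC]; exact II_nonneg fun p => mul_nonneg (sq_nonneg _) (NN_nonneg _ _ _)
  have g' := mul_le_mul_of_nonneg_left g (sq_nonneg L)
  have l1 := mul_le_mul_of_nonneg_right S.Le p1
  have l2 := mul_le_mul_of_nonneg_right S.Le p2
  nlinarith

theorem level2 (S : Sys R e L κ J0 JJ u) (hw : Prof R w w') (hw' : Prof R w' w'') :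
    II R (fun p => w p.1 ^ 2 * NN 3 u p) ≤
      64 * II R (fun p => w p.1 ^ 2 * NN 2 (CR JJ u) p)
      + 25 * II R (fun p => w' p.1 ^ 2 * NN 2 u p)
      + II R (fun p => w'' p.1 ^ 2 * NN 1 u p) := by
  have hf := CR_smooth S.Js S.us
  have hwc := hw.sm.continuous
  have hc' := hw.cont'
  have n1 := (NN_smooth 1 u S.us).continuous
  have n2 := (NN_smooth 2 u S.us).continuous
  have cX : Continuous (fun p => w p.1 ^ 2 * (NN 1 u p * NN 2 u p)) := by fun_prop
  have cY : Continuous (fun p => w p.1 ^ 2 * NN 1 u p ^ 3) := by fun_prop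
  have cA : ∀ a b, Continuous (fun p => w p.1 ^ 2 * NN 1 (DD b (DD a u)) p) := fun a b => by
    have := (NN_smooth 1 _ (DD_smooth (DD_smooth S.us a) b)).continuous
    fun_prop
  have cB : ∀ a b, Continuous (fun p => w p.1 ^ 2 * NN 0 (DD b (DD a (CR JJ u))) p) := fun a b => by
    have := (NN_smooth 0 _ (DD_smooth (DD_smooth hf a) b)).continuous
    fun_prop
  have cC : ∀ a b, Continuous (fun p => w' p.1 ^ 2 * NN 0 (DD b (DD a u)) p) := fun a b => by
    have := (NN_smooth 0 _ (DD_smooth (DD_smooth S.us a) b)).continuous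
    fun_prop
  have step : ∀ a b, II R (fun p => w p.1 ^ 2 * NN 1 (DD b (DD a u)) p) ≤
      16 * (2 * II R (fun p => w p.1 ^ 2 * NN 0 (DD b (DD a (CR JJ u))) p)
        + (36 * L ^ 2) * II R (fun p => w p.1 ^ 2 * (NN 1 u p * NN 2 u p))
        + (4 * L ^ 2) * II R (fun p => w p.1 ^ 2 * NN 1 u p ^ 3))
      + 12 * II R (fun p => w' p.1 ^ 2 * NN 0 (DD b (DD a u)) p) := by
    intro a b
    have ha := DD_smooth S.us a
    have hd := DD_smooth ha b
    have hJa := DD_smooth S.Js a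
    have f0 := (NN_smooth 0 _ (DD_smooth (DD_smooth hf a) b)).continuous
    have cc := (CR_smooth S.Js hd).continuous
    refine (lin_est' S.hR hw S.Jn S.Ja S.Js S.hκ S.Jκ hd (DD_per (DD_per S.up a) b)).trans ?_
    have : II R (fun p => w p.1 ^ 2 * ‖CR JJ (DD b (DD a u)) p‖ ^ 2) ≤
        II R (fun p => (2 * (w p.1 ^ 2 * NN 0 (DD b (DD a (CR JJ u))) p)
        + (36 * L ^ 2) * (w p.1 ^ 2 * (NN 1 u p * NN 2 u p)))
        + (4 * L ^ 2) * (w p.1 ^ 2 * NN 1 u p ^ 3)) := by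
      refine II_mono (by fun_prop) (by fun_prop) ?_
      intro p hp
      have ht := DD_smooth S.us false
      have e1 : DD a (CR JJ u) = fun q => CR JJ (DD a u) q + DD a JJ q (DD false u q) := by
        funext q; exact CR_comm S.Js S.us a q
      have e2 : DD b (DD a (CR JJ u)) p = CR JJ (DD b (DD a u)) p + DD b JJ p (DD false (DD a u) p)
          + (DD a JJ p (DD b (DD false u) p) + DD b (DD a JJ) p (DD false u p)) := by
        rw [e1, DD_add (CR_smooth S.Js ha) (hJa.clm_apply ht), CR_comm S.Js ha,
          DD_clm_apply hJa ht]
      have hP0 := NN_nonneg 1 u p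
      have hM0 := NN_nonneg 2 u p
      have hr := Real.sq_sqrt hP0
      have hm := Real.sq_sqrt hM0
      have hr0 := Real.sqrt_nonneg (NN 1 u p)
      have hm0 := Real.sqrt_nonneg (NN 2 u p)
      have L0 := S.L0
      have b1 : ‖DD b JJ p (DD false (DD a u) p)‖ ≤ (L * √(NN 1 u p)) * √(NN 2 u p) :=
        ((DD b JJ p).le_opNorm _).trans (mul_le_mul (S.J1 p b hp) (le_sqrt_NN2 u false a p)
          (norm_nonneg _) (by positivity))
      have b2 : ‖DD a JJ p (DD b (DD false u) p)‖ ≤ (L * √(NN 1 u p)) * √(NN 2 u p) :=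
        ((DD a JJ p).le_opNorm _).trans (mul_le_mul (S.J1 p a hp) (le_sqrt_NN2 u b false p)
          (norm_nonneg _) (by positivity))
      have b3 : ‖DD b (DD a JJ) p (DD false u p)‖ ≤
          (L * (NN 1 u p + √(NN 2 u p))) * √(NN 1 u p) :=
        ((DD b (DD a JJ) p).le_opNorm _).trans (mul_le_mul (S.J2 p b a hp) (le_sqrt_NN1 u false p)
          (norm_nonneg _) (by positivity))
      have e3 : CR JJ (DD b (DD a u)) p = DD b (DD a (CR JJ u)) p - DD b JJ p (DD false (DD a u) p)
          - (DD a JJ p (DD b (DD false u) p) + DD b (DD a JJ) p (DD false u p)) := by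
        rw [e2]; abel
      have b4 : ‖CR JJ (DD b (DD a u)) p‖ ≤ ‖DD b (DD a (CR JJ u)) p‖ +
          (3 * L * (√(NN 1 u p) * √(NN 2 u p)) + L * (NN 1 u p * √(NN 1 u p))) := by
        rw [e3]
        have t1 := norm_sub_le (DD b (DD a (CR JJ u)) p - DD b JJ p (DD false (DD a u) p))
          (DD a JJ p (DD b (DD false u) p) + DD b (DD a JJ) p (DD false u p))
        have t2 := norm_sub_le (DD b (DD a (CR JJ u)) p) (DD b JJ p (DD false (DD a u) p))
        have t3 := norm_add_le (DD a JJ p (DD b (DD false u) p)) (DD b (DD a JJ) p (DD false u p))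
        linarith
      have b5 := sq_le_two (norm_nonneg _) b4
      have b6 := sq_le_two (x := 3 * L * (√(NN 1 u p) * √(NN 2 u p)) + L * (NN 1 u p * √(NN 1 u p)))
        (by positivity) le_rfl
      have q1 : (3 * L * (√(NN 1 u p) * √(NN 2 u p))) ^ 2 = 9 * L ^ 2 * (NN 1 u p * NN 2 u p) := by
        rw [mul_pow, mul_pow (√(NN 1 u p)), hr, hm]; ring
      have q2 : (L * (NN 1 u p * √(NN 1 u p))) ^ 2 = L ^ 2 * NN 1 u p ^ 3 := by
        rw [mul_pow, mul_pow (NN 1 u p), hr]; ring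
      rw [q1, q2] at b6
      have b7 : ‖CR JJ (DD b (DD a u)) p‖ ^ 2 ≤ 2 * NN 0 (DD b (DD a (CR JJ u))) p
          + 36 * L ^ 2 * (NN 1 u p * NN 2 u p) + 4 * L ^ 2 * NN 1 u p ^ 3 := by
        change _ ≤ 2 * ‖DD b (DD a (CR JJ u)) p‖ ^ 2 + _ + _
        linarith
      have b8 := mul_le_mul_of_nonneg_left b7 (sq_nonneg (w p.1))
      linarith
    rw [II_add (G := fun p => 2 * (w p.1 ^ 2 * NN 0 (DD b (DD a (CR JJ u))) p)
        + (36 * L ^ 2) * (w p.1 ^ 2 * (NN 1 u p * NN 2 u p)))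
        ((((cB a b).const_mul 2)).add (cX.const_mul _)) (cY.const_mul _),
      II_add ((cB a b).const_mul 2) (cX.const_mul _), II_smul, II_smul, II_smul] at this
    change 16 * II R (fun p => w p.1 ^ 2 * ‖CR JJ (DD b (DD a u)) p‖ ^ 2) + _ ≤ _
    have e0 : II R (fun p => w' p.1 ^ 2 * ‖DD b (DD a u) p‖ ^ 2) =
      II R (fun p => w' p.1 ^ 2 * NN 0 (DD b (DD a u)) p) := rfl
    rw [e0]
    linarith
  have s1 := step true true
  have s2 := step true false
  have s3 := step false true
  have s4 := step false false
  have four : ∀ {f : Bool → Bool → ℝ × ℝ → ℝ} (_ : ∀ a b, Continuous (f a b)),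
      II R (fun p => (f true true p + f true false p) + (f false true p + f false false p)) =
      II R (f true true) + II R (f true false) + (II R (f false true) + II R (f false false)) := by
    intro f hf
    rw [II_add (G := fun p => f true true p + f true false p)
      (H := fun p => f false true p + f false false p)
      ((hf _ _).add (hf _ _)) ((hf _ _).add (hf _ _)), II_add (hf _ _) (hf _ _),
      II_add (hf _ _) (hf _ _)]
  have tA := four cA
  have tB := four cB
  have tC := four cC
  have eA : (fun p => w p.1 ^ 2 * NN 3 u p) = fun p => (w p.1 ^ 2 * NN 1 (DD true (DD true u)) p
      + w p.1 ^ 2 * NN 1 (DD false (DD true u)) p) + (w p.1 ^ 2 * NN 1 (DD true (DD false u)) p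
      + w p.1 ^ 2 * NN 1 (DD false (DD false u)) p) := by
    funext p; rw [← mul_add, ← mul_add, ← mul_add]; rfl
  have eB : (fun p => w p.1 ^ 2 * NN 2 (CR JJ u) p) = fun p =>
      (w p.1 ^ 2 * NN 0 (DD true (DD true (CR JJ u))) p
      + w p.1 ^ 2 * NN 0 (DD false (DD true (CR JJ u))) p)
      + (w p.1 ^ 2 * NN 0 (DD true (DD false (CR JJ u))) p
      + w p.1 ^ 2 * NN 0 (DD false (DD false (CR JJ u))) p) := by
    funext p; rw [← mul_add, ← mul_add, ← mul_add]; rfl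
  have eC : (fun p => w' p.1 ^ 2 * NN 2 u p) = fun p =>
      (w' p.1 ^ 2 * NN 0 (DD true (DD true u)) p
      + w' p.1 ^ 2 * NN 0 (DD false (DD true u)) p)
      + (w' p.1 ^ 2 * NN 0 (DD true (DD false u)) p
      + w' p.1 ^ 2 * NN 0 (DD false (DD false u)) p) := by
    funext p; rw [← mul_add, ← mul_add, ← mul_add]; rfl
  rw [← eA] at tA
  rw [← eB] at tB
  rw [← eC] at tC
  have tot : II R (fun p => w p.1 ^ 2 * NN 3 u p) ≤ 32 * II R (fun p => w p.1 ^ 2 * NN 2 (CR JJ u) p)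
      + 12 * II R (fun p => w' p.1 ^ 2 * NN 2 u p)
      + 2304 * (L ^ 2 * II R (fun p => w p.1 ^ 2 * (NN 1 u p * NN 2 u p)))
      + 256 * (L ^ 2 * II R (fun p => w p.1 ^ 2 * NN 1 u p ^ 3)) := by
    rw [tA, tB, tC]; linarith
  have hμ : 0 < 2592 * e ^ 2 := by have := S.e0; positivity
  have gX := gn_est2 S.hR hw hμ S.us S.up
  have gY := gn_est S.hR hw 1 S.us S.up S.ue
  have gQ := gn_est S.hR hw' 0 S.us S.up S.ue
  simp only [pow_zero, one_mul, zero_add, pow_one, Nat.cast_zero, mul_zero, add_zero,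
    Nat.cast_one, mul_one, Nat.reduceAdd] at gX gY gQ
  have pN : 0 ≤ II R (fun p => w p.1 ^ 2 * NN 3 u p) :=
    II_nonneg fun p => mul_nonneg (sq_nonneg _) (NN_nonneg _ _ _)
  have pT : 0 ≤ II R (fun p => w' p.1 ^ 2 * NN 2 u p) :=
    II_nonneg fun p => mul_nonneg (sq_nonneg _) (NN_nonneg _ _ _)
  have pU : 0 ≤ II R (fun p => w'' p.1 ^ 2 * NN 1 u p) :=
    II_nonneg fun p => mul_nonneg (sq_nonneg _) (NN_nonneg _ _ _)
  have pX : 0 ≤ II R (fun p => w p.1 ^ 2 * (NN 1 u p * NN 2 u p)) :=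
    II_nonneg fun p => mul_nonneg (sq_nonneg _) (mul_nonneg (NN_nonneg _ _ _) (NN_nonneg _ _ _))
  have pQ : 0 ≤ II R (fun p => w' p.1 ^ 2 * NN 1 u p ^ 2) :=
    II_nonneg fun p => mul_nonneg (sq_nonneg _) (pow_nonneg (NN_nonneg _ _ _) _)
  generalize II R (fun p => w p.1 ^ 2 * NN 3 u p) = N at *
  generalize II R (fun p => w p.1 ^ 2 * NN 2 (CR JJ u) p) = F at *
  generalize II R (fun p => w' p.1 ^ 2 * NN 2 u p) = T at *
  generalize II R (fun p => w'' p.1 ^ 2 * NN 1 u p) = U at *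
  generalize II R (fun p => w p.1 ^ 2 * (NN 1 u p * NN 2 u p)) = X at *
  generalize II R (fun p => w p.1 ^ 2 * NN 1 u p ^ 3) = Y at *
  generalize II R (fun p => w' p.1 ^ 2 * NN 1 u p ^ 2) = Q at *
  have e0 := S.e0
  have e1 := S.e1
  have Le := S.Le
  have he2 : e ^ 2 ≤ 1 := by nlinarith
  have he2' : 0 < e ^ 2 := by positivity
  have c1 : 2 * (2592 * e ^ 2)⁻¹ * Y ≤ (1/2) * X + Q := by
    have h1 : 2 * (2592 * e ^ 2)⁻¹ * Y ≤ 2 * (2592 * e ^ 2)⁻¹ * (648 * e ^ 2 * X + 8 * e ^ 2 * Q) := by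
      apply mul_le_mul_of_nonneg_left _ (by positivity)
      linarith
    have h2 : 2 * (2592 * e ^ 2)⁻¹ * (648 * e ^ 2 * X + 8 * e ^ 2 * Q) = (1/2) * X + (1/162) * Q := by
      field_simp; ring
    linarith
  have c2 : X ≤ 41472 * (e ^ 2 * N) + 34 * Q := by linarith
  have c3 : Y ≤ 648 * X + 8 * Q := by
    have h1 := mul_le_mul_of_nonneg_right he2 pX
    have h2 := mul_le_mul_of_nonneg_right he2 pQ
    linarith
  have L2 := sq_nonneg L
  have d1 := mul_le_mul_of_nonneg_left c2 L2
  have d2 := mul_le_mul_of_nonneg_left c3 L2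
  have d3 := mul_le_mul_of_nonneg_left gQ L2
  have d4 := mul_le_mul_of_nonneg_right Le pN
  have d5 := mul_le_mul_of_nonneg_right Le pT
  have d6 := mul_le_mul_of_nonneg_right Le pU
  linarith

end nonlin

theorem ode_half {a b μ κ σ l : ℝ} (hab : a ≤ b) {y g : ℝ → ℂ}
    (hy : ∀ s, HasDerivAt y ((l : ℂ) * y s + g s) s) (hg : Continuous g)
    (hκ : 0 < κ) (hσ : σ = 1 ∨ σ = -1) (h : κ ≤ σ * (l + μ)) :
    κ * ∫ s in a..b, ‖y s‖ ^ 2 * exp (2 * μ * s) ≤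
      σ * (‖y b‖ ^ 2 * exp (2 * μ * b) - ‖y a‖ ^ 2 * exp (2 * μ * a))
      + κ⁻¹ * ∫ s in a..b, ‖g s‖ ^ 2 * exp (2 * μ * s) := by
  have yc : Continuous y := continuous_iff_continuousAt.2 fun s => (hy s).continuousAt
  have hE : ∀ s, HasDerivAt (fun s => exp (2 * μ * s)) (exp (2 * μ * s) * (2 * μ)) s := fun s => by
    have := ((hasDerivAt_id s).const_mul (2 * μ)).exp
    simpa using this
  have hD : ∀ s, HasDerivAt (fun s => ‖y s‖ ^ 2 * exp (2 * μ * s))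
      ((2 * (l + μ) * ‖y s‖ ^ 2 + 2 * inner ℝ (y s) (g s)) * exp (2 * μ * s)) s := fun s => by
    have := ((hy s).norm_sq).mul (hE s)
    refine this.congr_deriv ?_
    rw [inner_add_right]
    have : (l : ℂ) * y s = l • y s := by simp
    rw [this, real_inner_smul_right, real_inner_self_eq_norm_sq]
    ring
  have ic : Continuous fun s => (inner ℝ (y s) (g s) : ℝ) := yc.inner hg
  have cD : Continuous fun s => (2 * (l + μ) * ‖y s‖ ^ 2 + 2 * inner ℝ (y s) (g s)) * exp (2 * μ * s) := by
    fun_prop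
  have ftc := intervalIntegral.integral_eq_sub_of_hasDerivAt (fun s _ => hD s)
    (cD.intervalIntegrable a b)
  rw [← ftc, ← intervalIntegral.integral_const_mul, ← intervalIntegral.integral_const_mul,
    ← intervalIntegral.integral_const_mul, ← intervalIntegral.integral_add]
  rotate_left
  · exact (cD.const_mul _).intervalIntegrable _ _
  · exact Continuous.intervalIntegrable (by fun_prop) _ _
  refine intervalIntegral.integral_mono_on hab (Continuous.intervalIntegrable (by fun_prop) _ _)
    (Continuous.intervalIntegrable (by fun_prop) _ _) ?_
  intro s _
  have hE0 := exp_pos (2 * μ * s)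
  have key : κ * ‖y s‖ ^ 2 ≤ σ * (2 * (l + μ) * ‖y s‖ ^ 2 + 2 * inner ℝ (y s) (g s))
      + κ⁻¹ * ‖g s‖ ^ 2 := by
    have h1 := abs_real_inner_le_norm (y s) (g s)
    have h1' := abs_le.1 h1
    have h2 : -(‖y s‖ * ‖g s‖) ≤ σ * inner ℝ (y s) (g s) := by
      rcases hσ with rfl | rfl <;> linarith [h1'.1, h1'.2]
    have h3 := mul_le_mul_of_nonneg_right h (sq_nonneg ‖y s‖)
    have h4 : 0 ≤ κ * ‖y s‖ ^ 2 - 2 * (‖y s‖ * ‖g s‖) + κ⁻¹ * ‖g s‖ ^ 2 := by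
      have : κ * ‖y s‖ ^ 2 - 2 * (‖y s‖ * ‖g s‖) + κ⁻¹ * ‖g s‖ ^ 2 =
        κ⁻¹ * (κ * ‖y s‖ - ‖g s‖) ^ 2 := by field_simp; ring
      rw [this]; positivity
    linarith
  have := mul_le_mul_of_nonneg_right key hE0.le
  linarith

theorem ode_full {R δ κ l : ℝ} (hR : 0 ≤ R) {y g : ℝ → ℂ}
    (hy : ∀ s, HasDerivAt y ((l : ℂ) * y s + g s) s) (hg : Continuous g)
    (hκ : 0 < κ) (hκ1 : κ ≤ δ) (hκ2 : κ ≤ 2 * π - δ) (h1 : y R = 0) (h2 : y (-R) = 0)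
    (h : 2 * π ≤ l ∨ l ≤ - (2 * π) ∨ (l = 0 ∧ y 0 = 0)) :
    κ ^ 2 * ∫ s in (-R)..R, ‖y s‖ ^ 2 * exp (-(2 * δ * |s|)) ≤
      ∫ s in (-R)..R, ‖g s‖ ^ 2 * exp (-(2 * δ * |s|)) := by
  have yc : Continuous y := continuous_iff_continuousAt.2 fun s => (hy s).continuousAt
  have split : ∀ f : ℝ → ℂ, Continuous f → ∫ s in (-R)..R, ‖f s‖ ^ 2 * exp (-(2 * δ * |s|)) =
      (∫ s in (-R)..0, ‖f s‖ ^ 2 * exp (2 * δ * s)) + ∫ s in (0:ℝ)..R, ‖f s‖ ^ 2 * exp (2 * (-δ) * s) := by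
    intro f hf
    rw [← intervalIntegral.integral_add_adjacent_intervals (b := 0)
      (Continuous.intervalIntegrable (by fun_prop) _ _) (Continuous.intervalIntegrable (by fun_prop) _ _)]
    congr 1
    · refine intervalIntegral.integral_congr fun s hs => ?_
      rw [uIcc_of_le (by linarith)] at hs
      rw [abs_of_nonpos hs.2]; ring_nf
    · refine intervalIntegral.integral_congr fun s hs => ?_
      rw [uIcc_of_le (by linarith)] at hs
      rw [abs_of_nonneg hs.1]; ring_nf
  rw [split y yc, split g hg]
  have fin : κ * ((∫ s in (-R)..0, ‖y s‖ ^ 2 * exp (2 * δ * s)) + ∫ s in (0:ℝ)..R, ‖y s‖ ^ 2 * exp (2 * (-δ) * s))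
    ≤ κ⁻¹ * ((∫ s in (-R)..0, ‖g s‖ ^ 2 * exp (2 * δ * s)) + ∫ s in (0:ℝ)..R, ‖g s‖ ^ 2 * exp (2 * (-δ) * s)) := by
    have hl := fun σ hσ h => ode_half (a := -R) (b := 0) (μ := δ) (σ := σ) (by linarith) hy hg hκ hσ h
    have hr := fun σ hσ h => ode_half (a := 0) (b := R) (μ := -δ) (σ := σ) (by linarith) hy hg hκ hσ h
    simp only [h1, h2, norm_zero, mul_zero, exp_zero, mul_one, ne_eq, OfNat.ofNat_ne_zero,
      not_false_eq_true, zero_pow, zero_mul, zero_sub, sub_zero] at hl hr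
    rcases h with h | h | ⟨h, h0⟩
    · have A := hl 1 (Or.inl rfl) (by linarith)
      have B := hr 1 (Or.inl rfl) (by linarith)
      linarith
    · have A := hl (-1) (Or.inr rfl) (by linarith)
      have B := hr (-1) (Or.inr rfl) (by linarith)
      linarith
    · have A := hl 1 (Or.inl rfl) (by linarith)
      have B := hr (-1) (Or.inr rfl) (by linarith)
      rw [h0] at A B
      simp only [norm_zero, ne_eq, OfNat.ofNat_ne_zero, not_false_eq_true, zero_pow, mul_zero,
        neg_zero, zero_add] at A B
      linarith
  have := mul_le_mul_of_nonneg_left fin hκ.le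
  rw [← mul_assoc, ← mul_assoc, mul_inv_cancel₀ hκ.ne', one_mul] at this
  rwa [pow_two]

/-- Fourier coefficient in t. -/
def fcf (g : ℝ × ℝ → ℂ) (m : ℤ) (s : ℝ) : ℂ :=
  fourierCoeffOn (zero_lt_one' ℝ) (fun t => g (s, t)) m

theorem fcf_eq (g : ℝ × ℝ → ℂ) (m : ℤ) (s : ℝ) :
    fcf g m s = ∫ t in (0:ℝ)..1, fourier (-m) (t : AddCircle ((1:ℝ) - 0)) * g (s, t) := by
  rw [fcf, fourierCoeffOn_eq_integral]
  simp

theorem fc_cont (m : ℤ) : Continuous fun t : ℝ => (fourier (-m) (t : AddCircle ((1:ℝ) - 0)) : ℂ) :=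
  (map_continuous (fourier (-m))).comp (AddCircle.continuous_mk' _)

theorem fcf_add {g h : ℝ × ℝ → ℂ} (hg : Continuous g) (hh : Continuous h) (m : ℤ) (s : ℝ) :
    fcf (fun p => g p + h p) m s = fcf g m s + fcf h m s := by
  have := fc_cont m
  rw [fcf_eq, fcf_eq, fcf_eq, ← intervalIntegral.integral_add]
  · simp only [mul_add]
  · exact Continuous.intervalIntegrable (by fun_prop) _ _
  · exact Continuous.intervalIntegrable (by fun_prop) _ _

theorem fcf_mul (g : ℝ × ℝ → ℂ) (c : ℂ) (m : ℤ) (s : ℝ) :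
    fcf (fun p => c * g p) m s = c * fcf g m s := by
  rw [fcf, fcf, ← fourierCoeffOn.const_mul]

theorem fcf_deriv {g : ℝ × ℝ → ℂ} (hg : ContDiff ℝ ∞ g) (m : ℤ) (s : ℝ) :
    HasDerivAt (fcf g m) (fcf (DD true g) m s) s := by
  have e : fcf g m = fun s => ∫ t in (0:ℝ)..1, fourier (-m) (t : AddCircle ((1:ℝ) - 0)) * g (s, t) := by
    funext s; exact fcf_eq g m s
  rw [e, fcf_eq]
  have c1 := fc_cont m
  have c2 := hg.continuous
  have c3 := (DD_smooth hg true).continuous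
  have cc : Continuous fun p : ℝ × ℝ => (fourier (-m) (p.2 : AddCircle ((1:ℝ) - 0)) : ℂ) * DD true g p := by
    have := c1.comp (continuous_snd (X := ℝ) (Y := ℝ))
    exact this.mul c3
  obtain ⟨M, hM⟩ := (isCompact_Icc (a := s - 1) (b := s + 1)).prod (isCompact_Icc (a := (0:ℝ)) (b := 1))
    |>.exists_bound_of_continuousOn cc.continuousOn
  refine (intervalIntegral.hasDerivAt_integral_of_dominated_loc_of_deriv_le (s := Icc (s - 1) (s + 1))
    (F' := fun s t => fourier (-m) (t : AddCircle ((1:ℝ) - 0)) * DD true g (s, t))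
    (bound := fun _ => M) (Icc_mem_nhds (by linarith) (by linarith)) ?_ ?_ ?_ ?_ ?_ ?_).2
  · exact Eventually.of_forall fun x => Continuous.aestronglyMeasurable (by fun_prop)
  · exact Continuous.intervalIntegrable (by fun_prop) _ _
  · exact Continuous.aestronglyMeasurable (by fun_prop)
  · refine Eventually.of_forall fun t ht x hx => ?_
    rw [uIoc_of_le (by norm_num)] at ht
    exact hM (x, t) ⟨hx, ht.1.le, ht.2⟩
  · exact intervalIntegrable_const
  · refine Eventually.of_forall fun t ht x hx => ?_
    exact (hasDerivAt_DDs hg x t).const_mul _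

theorem fcf_t {g : ℝ × ℝ → ℂ} (hg : ContDiff ℝ ∞ g) (hp : Per g) (m : ℤ) (s : ℝ) :
    fcf (DD false g) m s = 2 * π * Complex.I * m * fcf g m s := by
  have c3 := (DD_smooth hg false).continuous
  have h1 : g (s, 1) = g (s, 0) := by have := hp s 0; simpa using this
  by_cases hm : m = 0
  · subst hm
    rw [fcf_eq]
    simp only [neg_zero, fourier_zero, one_mul, Int.cast_zero, mul_zero, zero_mul]
    rw [intervalIntegral.integral_eq_sub_of_hasDerivAt (fun t _ => hasDerivAt_DDt hg s t)
      (Continuous.intervalIntegrable (by fun_prop) _ _), h1, sub_self]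
  · have := fourierCoeffOn_of_hasDerivAt (zero_lt_one' ℝ) hm (fun t _ => hasDerivAt_DDt hg s t)
      (Continuous.intervalIntegrable (by fun_prop) _ _)
    rw [h1, sub_self] at this
    have hpi : (π : ℂ) ≠ 0 := by exact_mod_cast pi_ne_zero
    have hm' : (m : ℂ) ≠ 0 := by exact_mod_cast hm
    unfold fcf
    rw [this]
    have := Complex.I_ne_zero
    field_simp
    simp

theorem fcf_parseval {g : ℝ × ℝ → ℂ} (hg : Continuous g) (s : ℝ) :
    HasSum (fun m => ‖fcf g m s‖ ^ 2) (∫ t in (0:ℝ)..1, ‖g (s, t)‖ ^ 2) := by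
  have : MemLp (fun t => g (s, t)) 2 (volume.restrict (Ioc (0:ℝ) 1)) := by
    have c : Continuous fun t => g (s, t) := by fun_prop
    obtain ⟨M, hM⟩ := (isCompact_Icc (a := (0:ℝ)) (b := 1)).exists_bound_of_continuousOn c.continuousOn
    refine MemLp.of_bound c.aestronglyMeasurable M ?_
    refine (ae_restrict_iff' measurableSet_Ioc).2 (Eventually.of_forall fun t ht => hM t ⟨ht.1.le, ht.2⟩)
  have h := hasSum_sq_fourierCoeffOn (zero_lt_one' ℝ) this
  simp only [sub_zero, inv_one, one_smul] at h
  exact h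

theorem fcf_cont {g : ℝ × ℝ → ℂ} (hg : ContDiff ℝ ∞ g) (m : ℤ) : Continuous (fcf g m) :=
  continuous_iff_continuousAt.2 fun s => (fcf_deriv hg m s).continuousAt

theorem II_iter {R : ℝ} (hR : 0 ≤ R) {G : ℝ × ℝ → ℝ} (hG : Continuous G) :
    II R G = ∫ s in (-R)..R, ∫ t in (0:ℝ)..1, G (s, t) := by
  unfold II
  rw [Measure.volume_eq_prod, ← Measure.prod_restrict, integral_prod]
  swap
  · rw [Measure.prod_restrict, ← Measure.volume_eq_prod]; exact II_int hG
  rw [integral_Icc_eq_integral_Ioc, ← intervalIntegral.integral_of_le (by linarith)]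
  refine intervalIntegral.integral_congr fun s _ => ?_
  rw [integral_Icc_eq_integral_Ioc, ← intervalIntegral.integral_of_le (by linarith)]

theorem fourier_est {R δ κ : ℝ} (hR : 0 ≤ R) (hκ : 0 < κ) (hκ1 : κ ≤ δ) (hκ2 : κ ≤ 2 * π - δ)
    {g : ℝ × ℝ → ℂ} (hg : ContDiff ℝ ∞ g) (hp : Per g) (h1 : ∀ t, g (R, t) = 0)
    (h2 : ∀ t, g (-R, t) = 0) (h0 : ∫ t in (0:ℝ)..1, g (0, t) = 0) :
    κ ^ 2 * II R (fun p => ‖g p‖ ^ 2 * exp (-(2 * δ * |p.1|))) ≤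
      II R (fun p => ‖DD true g p + Complex.I * DD false g p‖ ^ 2 * exp (-(2 * δ * |p.1|))) := by
  set h : ℝ × ℝ → ℂ := fun p => DD true g p + Complex.I * DD false g p with hh
  have hs : ContDiff ℝ ∞ h := (DD_smooth hg true).add (contDiff_const.mul (DD_smooth hg false))
  have gc := hg.continuous
  have hc := hs.continuous
  have hfc : ∀ m s, fcf h m s = fcf (DD true g) m s - (2 * π * m : ℝ) * fcf g m s := by
    intro m s
    rw [hh, fcf_add (DD_smooth hg true).continuous
      (h := fun p => Complex.I * DD false g p) (continuous_const.mul (DD_smooth hg false).continuous), fcf_mul, fcf_t hg hp]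
    push_cast
    linear_combination (2 * π * m * fcf g m s) * Complex.I_sq
  have one : ∀ m : ℤ, κ ^ 2 * ∫ s in (-R)..R, ‖fcf g m s‖ ^ 2 * exp (-(2 * δ * |s|)) ≤
      ∫ s in (-R)..R, ‖fcf h m s‖ ^ 2 * exp (-(2 * δ * |s|)) := by
    intro m
    refine ode_full hR (l := 2 * π * m) ?_ (fcf_cont hs m) hκ hκ1 hκ2 ?_ ?_ ?_
    · intro s
      convert fcf_deriv hg m s using 1
      rw [hfc]; ring
    · rw [fcf_eq]; simp [h1]
    · rw [fcf_eq]; simp [h2]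
    · rcases lt_trichotomy m 0 with hm | hm | hm
      · right; left
        have : (m : ℝ) ≤ -1 := by exact_mod_cast (show m ≤ -1 by omega)
        nlinarith [pi_pos]
      · right; right
        subst hm
        refine ⟨by simp, ?_⟩
        rw [fcf_eq]; simpa using h0
      · left
        have : (1 : ℝ) ≤ m := by exact_mod_cast (show 1 ≤ m by omega)
        nlinarith [pi_pos]
  have par : ∀ f : ℝ × ℝ → ℂ, Continuous f → II R (fun p => ‖f p‖ ^ 2 * exp (-(2 * δ * |p.1|))) =
      ∫ s in (-R)..R, (∫ t in (0:ℝ)..1, ‖f (s, t)‖ ^ 2) * exp (-(2 * δ * |s|)) := by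
    intro f hf
    rw [II_iter hR (by fun_prop)]
    refine intervalIntegral.integral_congr fun s _ => ?_
    exact intervalIntegral.integral_mul_const (exp (-(2 * δ * |s|))) (fun t => ‖f (s, t)‖ ^ 2)
  have icont : ∀ f : ℝ × ℝ → ℂ, Continuous f → Continuous fun s : ℝ =>
      (∫ t in (0:ℝ)..1, ‖f (s, t)‖ ^ 2) := by
    intro f hf
    exact intervalIntegral.continuous_parametric_intervalIntegral_of_continuous' (by fun_prop) 0 1
  have bess : ∀ F : Finset ℤ, ∑ m ∈ F, (κ ^ 2 * ∫ s in (-R)..R, ‖fcf g m s‖ ^ 2 * exp (-(2 * δ * |s|)))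
      ≤ II R (fun p => ‖h p‖ ^ 2 * exp (-(2 * δ * |p.1|))) := by
    intro F
    refine (Finset.sum_le_sum fun m _ => one m).trans ?_
    have ci := icont h hc
    have cF := fun m => fcf_cont hs m
    rw [← intervalIntegral.integral_finsetSum
      (fun m _ => Continuous.intervalIntegrable (by have := cF m; fun_prop) _ _), par h hc]
    refine intervalIntegral.integral_mono_on (by linarith) ?_ ?_ ?_
    · exact Continuous.intervalIntegrable
        (continuous_finsetSum _ fun m _ => by have := cF m; fun_prop) _ _
    · exact Continuous.intervalIntegrable (by fun_prop) _ _
    · intro s _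
      rw [← Finset.sum_mul]
      refine mul_le_mul_of_nonneg_right ?_ (exp_pos _).le
      exact sum_le_hasSum F (fun m _ => sq_nonneg _) (fcf_parseval hc s)
  have key : HasSum (fun m : ℤ => ∫ s in Ioc (-R) R, ‖fcf g m s‖ ^ 2 * exp (-(2 * δ * |s|)))
      (∫ s in Ioc (-R) R, ∑' m : ℤ, ‖fcf g m s‖ ^ 2 * exp (-(2 * δ * |s|))) := by
    refine hasSum_integral_of_summable_integral_norm (fun m => ?_) ?_
    · have c : Continuous fun s => ‖fcf g m s‖ ^ 2 * exp (-(2 * δ * |s|)) := by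
        have := fcf_cont hg m; fun_prop
      exact (c.integrableOn_Icc).mono_set Ioc_subset_Icc_self
    · have : ∀ (m : ℤ) s, ‖(‖fcf g m s‖ ^ 2 * exp (-(2 * δ * |s|)))‖ = ‖fcf g m s‖ ^ 2 * exp (-(2 * δ * |s|)) :=
        fun m s => Real.norm_of_nonneg (by positivity)
      simp only [this]
      refine summable_of_sum_le (c := (κ ^ 2)⁻¹ * II R (fun p => ‖h p‖ ^ 2 * exp (-(2 * δ * |p.1|))))
        (fun m => integral_nonneg fun s => by positivity) ?_
      intro F
      have b := bess F
      rw [← Finset.mul_sum] at b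
      rw [le_inv_mul_iff₀ (by positivity)]
      simpa only [intervalIntegral.integral_of_le (show -R ≤ R by linarith)] using b
  have e1 : II R (fun p => ‖g p‖ ^ 2 * exp (-(2 * δ * |p.1|))) =
      ∫ s in Ioc (-R) R, ∑' m : ℤ, ‖fcf g m s‖ ^ 2 * exp (-(2 * δ * |s|)) := by
    rw [par g gc, intervalIntegral.integral_of_le (by linarith)]
    congr 1
    funext s
    rw [tsum_mul_right, (fcf_parseval gc s).tsum_eq]
  rw [e1, ← key.tsum_eq, ← tsum_mul_left]
  refine (key.summable.mul_left (κ ^ 2)).tsum_le_of_sum_le fun F => ?_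
  simpa only [intervalIntegral.integral_of_le (show -R ≤ R by linarith)] using bess F

/-- vector version -/
theorem fourier_estV {n : ℕ} {R δ κ : ℝ} (hR : 0 ≤ R) (hκ : 0 < κ) (hκ1 : κ ≤ δ)
    (hκ2 : κ ≤ 2 * π - δ)
    {g : ℝ × ℝ → Cn n} (hg : ContDiff ℝ ∞ g) (hp : Per g) (h1 : ∀ t, g (R, t) = 0)
    (h2 : ∀ t, g (-R, t) = 0) (h0 : ∫ t in (0:ℝ)..1, g (0, t) = 0) :
    κ ^ 2 * II R (fun p => ‖g p‖ ^ 2 * exp (-(2 * δ * |p.1|))) ≤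
      II R (fun p => ‖DD true g p + Jstd n (DD false g p)‖ ^ 2 * exp (-(2 * δ * |p.1|))) := by
  have prj : ∀ k : Fin n, ∃ P : Cn n →L[ℝ] ℂ, ∀ x : Cn n, P x = x k := fun k =>
    ⟨(EuclideanSpace.proj (𝕜 := ℂ) k).restrictScalars ℝ, fun x => rfl⟩
  choose P hP using prj
  have gc := hg.continuous
  have d1 := (DD_smooth hg true).continuous
  have d2 := (DD_smooth hg false).continuous
  have one : ∀ k, κ ^ 2 * II R (fun p => ‖P k (g p)‖ ^ 2 * exp (-(2 * δ * |p.1|))) ≤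
      II R (fun p => ‖P k (DD true g p + Jstd n (DD false g p))‖ ^ 2 * exp (-(2 * δ * |p.1|))) := by
    intro k
    have := fourier_est (g := fun p => P k (g p)) hR hκ hκ1 hκ2 ((P k).contDiff.comp hg)
      (fun s t => by simp only [hp s t]) (fun t => by simp [h1]) (fun t => by simp [h2]) ?_
    · convert this using 5 with p
      rw [DD_clm _ hg, DD_clm _ hg, map_add]
      simp [hP, Jstd]
    · have := (P k).intervalIntegral_comp_comm (μ := volume) (a := 0) (b := 1) (f := fun t => g (0, t))
        (Continuous.intervalIntegrable (by fun_prop) _ _)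
      rw [this, h0, map_zero]
  have sum : ∀ f : ℝ × ℝ → Cn n, Continuous f → II R (fun p => ‖f p‖ ^ 2 * exp (-(2 * δ * |p.1|))) =
      ∑ k, II R (fun p => ‖P k (f p)‖ ^ 2 * exp (-(2 * δ * |p.1|))) := by
    intro f hf
    unfold II
    rw [← integral_finsetSum]
    · congr 1
      funext p
      beta_reduce
      rw [EuclideanSpace.norm_sq_eq, Finset.sum_mul]
      simp only [hP]
    · intro k _
      exact II_int (by fun_prop)
  rw [sum g gc, sum _ (by fun_prop), Finset.mul_sum]
  exact Finset.sum_le_sum fun k _ => one k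

structure Cut (K δ ρ : ℝ) (c c1 w w1 w2 : ℝ → ℝ) : Prop where
  pc : Prof (ρ + 1) c c1
  pw : Prof (ρ + 1) w w1
  pw1 : Prof (ρ + 1) w1 w2
  in0 : ∀ s, |s| ≤ ρ → c s = 1
  in1 : ∀ s, |s| ≤ ρ → c1 s = 0
  in2 : ∀ s, |s| ≤ ρ → w1 s ^ 2 ≤ K * w s ^ 2
  in3 : ∀ s, |s| ≤ ρ → w2 s ^ 2 ≤ K * w s ^ 2
  en1 : ∀ s, ρ ≤ |s| → c1 s ^ 2 ≤ K
  en2 : ∀ s, ρ ≤ |s| → w1 s ^ 2 ≤ K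
  en3 : ∀ s, ρ ≤ |s| → w2 s ^ 2 ≤ K
  c01 : ∀ s, c s ^ 2 ≤ 1
  le1 : ∀ s, w s ^ 2 ≤ c s ^ 2 * exp (2 * δ * (ρ - |s|))
  le2 : ∀ s, c s ^ 2 * exp (2 * δ * (ρ - |s|)) ≤ K * w s ^ 2

theorem theta_facts : ∃ (M : ℝ) (θ1 θ2 : ℝ → ℝ), 1 ≤ M ∧ ContDiff ℝ ∞ θ1 ∧
    (∀ x, HasDerivAt smoothTransition (θ1 x) x) ∧ (∀ x, HasDerivAt θ1 (θ2 x) x) ∧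
    (∀ x, x ≤ 0 → θ1 x = 0) ∧ (∀ x, 1 ≤ x → θ1 x = 0 ∧ θ2 x = 0) ∧
    (∀ x, |θ1 x| ≤ M) ∧ (∀ x, |θ2 x| ≤ M) := by
  have h0 : ContDiff ℝ ∞ smoothTransition := smoothTransition.contDiff
  have h1 : ContDiff ℝ ∞ (deriv smoothTransition) := (contDiff_infty_iff_deriv.1 h0).2
  have h2 : ContDiff ℝ ∞ (deriv (deriv smoothTransition)) := (contDiff_infty_iff_deriv.1 h1).2
  -- vanishing
  have gen : ∀ f : ℝ → ℝ, Continuous (deriv f) → ∀ c : ℝ, (∀ x < 0, f x = c) →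
      ∀ x ≤ 0, deriv f x = 0 := by
    intro f hf c h x hx
    have cl : IsClosed {x | deriv f x = 0} := isClosed_eq hf continuous_const
    have sub : Iio (0:ℝ) ⊆ {x | deriv f x = 0} := by
      intro y hy
      have : f =ᶠ[nhds y] fun _ => c := by
        filter_upwards [Iio_mem_nhds hy] with z hz using h z hz
      simp [this.deriv_eq]
    have := cl.closure_subset_iff.2 sub
    rw [closure_Iio] at this
    exact this hx
  have gen' : ∀ f : ℝ → ℝ, Continuous (deriv f) → ∀ c : ℝ, (∀ x > 1, f x = c) →
      ∀ x ≥ 1, deriv f x = 0 := by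
    intro f hf c h x hx
    have cl : IsClosed {x | deriv f x = 0} := isClosed_eq hf continuous_const
    have sub : Ioi (1:ℝ) ⊆ {x | deriv f x = 0} := by
      intro y hy
      have : f =ᶠ[nhds y] fun _ => c := by
        filter_upwards [Ioi_mem_nhds hy] with z hz using h z hz
      simp [this.deriv_eq]
    have := cl.closure_subset_iff.2 sub
    rw [closure_Ioi] at this
    exact this hx
  have z1 := gen _ h1.continuous 0 fun x hx => smoothTransition.zero_of_nonpos hx.le
  have z2 := gen _ h2.continuous 0 fun x hx => z1 x hx.le
  have o1 := gen' _ h1.continuous 1 fun x hx => smoothTransition.one_of_one_le (le_of_lt hx)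
  have o2 := gen' _ h2.continuous 0 fun x hx => o1 x (le_of_lt hx)
  obtain ⟨A, hA⟩ := (isCompact_Icc (a := (0:ℝ)) (b := 1)).exists_bound_of_continuousOn h1.continuous.continuousOn
  obtain ⟨B, hB⟩ := (isCompact_Icc (a := (0:ℝ)) (b := 1)).exists_bound_of_continuousOn h2.continuous.continuousOn
  have bd : ∀ (f : ℝ → ℝ) (A M : ℝ), 0 ≤ M → A ≤ M → (∀ x ∈ Icc (0:ℝ) 1, ‖f x‖ ≤ A) → (∀ x ≤ 0, f x = 0) →
      (∀ x ≥ 1, f x = 0) → ∀ x, |f x| ≤ M := by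
    intro f A M hM hAM h0 h1 h2 x
    rcases le_total x 0 with h | h
    · rw [h1 x h]; simpa
    rcases le_total 1 x with h' | h'
    · rw [h2 x h']; simpa
    exact (h0 x ⟨h, h'⟩).trans hAM
  refine ⟨max 1 (max A B), deriv smoothTransition, deriv (deriv smoothTransition), le_max_left _ _,
    h1, fun x => ?_, fun x => ?_, z1, fun x hx => ⟨o1 x hx, o2 x hx⟩, ?_, ?_⟩
  · exact ((h0.differentiable (by simp)) x).hasDerivAt
  · exact ((h1.differentiable (by simp)) x).hasDerivAt
  · exact bd _ A _ (by positivity) ((le_max_left _ _).trans (le_max_right _ _)) hA z1 o1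
  · exact bd _ B _ (by positivity) ((le_max_right _ _).trans (le_max_right _ _)) hB z2 o2

theorem weight_facts (δ ρ : ℝ) (hδ : 0 < δ) : ∃ E E1 E2 : ℝ → ℝ, ContDiff ℝ ∞ E ∧ 
    (∀ s, HasDerivAt E (E1 s) s) ∧ (∀ s, HasDerivAt E1 (E2 s) s) ∧ (∀ s, 0 < E s) ∧
    (∀ s, |E1 s| ≤ δ * E s) ∧ (∀ s, |E2 s| ≤ (δ ^ 2 + δ) * E s) ∧ 
    (∀ s, E s ^ 2 ≤ exp (2 * δ * (ρ - |s|))) ∧ 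
    (∀ s, exp (2 * δ * (ρ - |s|)) ≤ exp (2 * δ) * E s ^ 2) ∧ (∀ s, ρ ≤ |s| → E s ≤ 1) := by
  have q0 : ∀ s : ℝ, 0 < 1 + s ^ 2 := fun s => by positivity
  have qp : ∀ s : ℝ, 0 < √(1 + s ^ 2) := fun s => Real.sqrt_pos.2 (q0 s)
  have qs : ∀ s : ℝ, √(1 + s ^ 2) ^ 2 = 1 + s ^ 2 := fun s => Real.sq_sqrt (q0 s).le
  have q1 : ∀ s : ℝ, 1 ≤ √(1 + s ^ 2) := fun s => by
    rw [Real.one_le_sqrt]; nlinarith [sq_nonneg s]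
  have ql : ∀ s : ℝ, |s| ≤ √(1 + s ^ 2) := fun s => Real.abs_le_sqrt (by linarith)
  have qu : ∀ s : ℝ, √(1 + s ^ 2) ≤ |s| + 1 := fun s => by
    rw [Real.sqrt_le_left (by positivity)]; nlinarith [abs_nonneg s, sq_abs s]
  have dq : ∀ s : ℝ, HasDerivAt (fun s : ℝ => √(1 + s ^ 2)) (s / √(1 + s ^ 2)) s := fun s => by
    have h := ((hasDerivAt_pow 2 s).const_add 1).sqrt (q0 s).ne'
    refine h.congr_deriv ?_
    have := (qp s).ne'
    field_simp
    simp
  have dq2 : ∀ s : ℝ, HasDerivAt (fun s : ℝ => s / √(1 + s ^ 2)) (1 / √(1 + s ^ 2) ^ 3) s := fun s => by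
    have h := (hasDerivAt_id s).div (dq s) (qp s).ne'
    refine h.congr_deriv ?_
    have h1 := (qp s).ne'
    have h2 := qs s
    simp only [id]
    field_simp
    rw [h2]; ring
  have dE : ∀ s : ℝ, HasDerivAt (fun s : ℝ => exp (δ * (ρ - √(1 + s ^ 2))))
      (-δ * (s / √(1 + s ^ 2)) * exp (δ * (ρ - √(1 + s ^ 2)))) s := fun s => by
    have h := (((dq s).const_sub ρ).const_mul δ).exp
    refine h.congr_deriv ?_
    ring
  have a1 : ∀ s : ℝ, |s / √(1 + s ^ 2)| ≤ 1 := fun s => by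
    rw [abs_div, abs_of_pos (qp s), div_le_one (qp s)]; exact ql s
  refine ⟨_, _, fun s => (δ ^ 2 * (s / √(1 + s ^ 2)) ^ 2 - δ * (1 / √(1 + s ^ 2) ^ 3)) *
    exp (δ * (ρ - √(1 + s ^ 2))), ?_, dE, ?_, fun s => exp_pos _, ?_, ?_, ?_, ?_, ?_⟩
  · refine ContDiff.exp (contDiff_const.mul (contDiff_const.sub (ContDiff.sqrt (by fun_prop) fun s => (q0 s).ne')))
  · intro s
    have h := ((dq2 s).const_mul (-δ)).mul (dE s)
    refine h.congr_deriv ?_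
    ring
  · intro s
    rw [abs_mul, abs_mul, abs_neg, abs_of_pos hδ, abs_of_pos (exp_pos _)]
    exact mul_le_mul_of_nonneg_right (mul_le_of_le_one_right hδ.le (a1 s)) (exp_pos _).le
  · intro s
    beta_reduce
    rw [abs_mul, abs_of_pos (exp_pos _)]
    refine mul_le_mul_of_nonneg_right ?_ (exp_pos _).le
    have h1 : (s / √(1 + s ^ 2)) ^ 2 ≤ 1 := by
      have := a1 s
      rw [← sq_abs]; exact pow_le_one₀ (abs_nonneg _) this
    have h2 : 1 / √(1 + s ^ 2) ^ 3 ≤ 1 := by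
      rw [div_le_one (pow_pos (qp s) 3)]; exact one_le_pow₀ (q1 s)
    have h3 : 0 ≤ 1 / √(1 + s ^ 2) ^ 3 := by positivity
    have h4 : 0 ≤ (s / √(1 + s ^ 2)) ^ 2 := by positivity
    have h5 := mul_le_mul_of_nonneg_left h1 (sq_nonneg δ)
    have h6 := mul_le_mul_of_nonneg_left h2 hδ.le
    have h7 := mul_nonneg (sq_nonneg δ) h4
    have h8 := mul_nonneg hδ.le h3
    rw [abs_le]; constructor <;> linarith [sq_nonneg δ]
  · intro s
    rw [← Real.exp_nat_mul, Real.exp_le_exp]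
    have := mul_le_mul_of_nonneg_left (ql s) hδ.le
    push_cast
    linarith
  · intro s
    rw [← Real.exp_nat_mul, ← Real.exp_add, Real.exp_le_exp]
    have := mul_le_mul_of_nonneg_left (qu s) hδ.le
    push_cast
    linarith
  · intro s hs
    rw [Real.exp_le_one_iff]
    have := ql s
    exact mul_nonpos_of_nonneg_of_nonpos hδ.le (by linarith)

theorem exists_cut (δ : ℝ) (hδ : 0 < δ) : ∃ K, 1 ≤ K ∧ ∀ ρ : ℝ, 0 < ρ →
    ∃ c c1 w w1 w2 : ℝ → ℝ, Cut K δ ρ c c1 w w1 w2 := by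
  obtain ⟨M, θ1, θ2, hM, s1, d1, d2, z1, o1, b1, b2⟩ := theta_facts
  have hM0 : 0 ≤ M := by linarith
  set A := 4 * M ^ 2 + 4 * M * δ + δ ^ 2 + δ + 2 * M with hA
  have hA1 : 1 ≤ A := by nlinarith [sq_nonneg M, sq_nonneg δ, mul_nonneg hM0 hδ.le]
  refine ⟨A ^ 2 + exp (2 * δ), by nlinarith [exp_pos (2 * δ)], fun ρ hρ => ?_⟩
  obtain ⟨E, E1, E2, sE, dE, dE1, E0, bE1, bE2, l1, l2, l3⟩ := weight_facts δ ρ hδ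
  have hK : A ^ 2 ≤ A ^ 2 + exp (2 * δ) := by linarith [exp_pos (2 * δ)]
  have dθm : ∀ s, HasDerivAt (fun s => smoothTransition (ρ + 1 - s)) (-θ1 (ρ + 1 - s)) s := fun s => by
    have := (d1 (ρ + 1 - s)).comp s ((hasDerivAt_id s).const_sub (ρ + 1))
    exact this.congr_deriv (by simp)
  have dθp : ∀ s, HasDerivAt (fun s => smoothTransition (ρ + 1 + s)) (θ1 (ρ + 1 + s)) s := fun s => by
    have := (d1 (ρ + 1 + s)).comp s ((hasDerivAt_id s).const_add (ρ + 1))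
    exact this.congr_deriv (by simp)
  have dθ1m : ∀ s, HasDerivAt (fun s => θ1 (ρ + 1 - s)) (-θ2 (ρ + 1 - s)) s := fun s => by
    have := (d2 (ρ + 1 - s)).comp s ((hasDerivAt_id s).const_sub (ρ + 1))
    exact this.congr_deriv (by simp)
  have dθ1p : ∀ s, HasDerivAt (fun s => θ1 (ρ + 1 + s)) (θ2 (ρ + 1 + s)) s := fun s => by
    have := (d2 (ρ + 1 + s)).comp s ((hasDerivAt_id s).const_add (ρ + 1))
    exact this.congr_deriv (by simp)
  set c : ℝ → ℝ := fun s => smoothTransition (ρ + 1 - s) * smoothTransition (ρ + 1 + s) with hc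
  set c1 : ℝ → ℝ := fun s => smoothTransition (ρ + 1 - s) * θ1 (ρ + 1 + s)
    - θ1 (ρ + 1 - s) * smoothTransition (ρ + 1 + s) with hc1
  set c2 : ℝ → ℝ := fun s => smoothTransition (ρ + 1 - s) * θ2 (ρ + 1 + s)
    - 2 * (θ1 (ρ + 1 - s) * θ1 (ρ + 1 + s)) + θ2 (ρ + 1 - s) * smoothTransition (ρ + 1 + s) with hc2
  have dc : ∀ s, HasDerivAt c (c1 s) s := fun s => by
    refine ((dθm s).mul (dθp s)).congr_deriv ?_
    rw [hc1]; ring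
  have dc1 : ∀ s, HasDerivAt c1 (c2 s) s := fun s => by
    refine (((dθm s).mul (dθ1p s)).sub ((dθ1m s).mul (dθp s))).congr_deriv ?_
    rw [hc2]; ring
  have sθ : ContDiff ℝ ∞ smoothTransition := smoothTransition.contDiff
  have sc : ContDiff ℝ ∞ c := by
    rw [hc]; exact (sθ.comp (by fun_prop)).mul (sθ.comp (by fun_prop))
  have sc1 : ContDiff ℝ ∞ c1 := by
    rw [hc1]
    exact ((sθ.comp (by fun_prop)).mul (s1.comp (by fun_prop))).sub
      ((s1.comp (by fun_prop)).mul (sθ.comp (by fun_prop)))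
  have sE1 : ContDiff ℝ ∞ E1 := by
    have : E1 = deriv E := by funext s; exact (dE s).deriv.symm
    rw [this]; exact (contDiff_infty_iff_deriv.1 sE).2
  have θz : smoothTransition 0 = 0 := smoothTransition.zero_of_nonpos le_rfl
  have t0 := smoothTransition.nonneg
  have t1 := smoothTransition.le_one
  have θa : ∀ x, |smoothTransition x| ≤ 1 := fun x => abs_le.2 ⟨by linarith [t0 x], t1 x⟩
  have c0 : ∀ s, 0 ≤ c s := fun s => mul_nonneg (t0 _) (t0 _)
  have cle : ∀ s, c s ≤ 1 := fun s => mul_le_one₀ (t1 _) (t0 _) (t1 _)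
  have bc1 : ∀ s, |c1 s| ≤ 2 * M := fun s => by
    rw [hc1]
    refine (abs_sub _ _).trans ?_
    rw [abs_mul, abs_mul]
    have := mul_le_mul (θa (ρ + 1 - s)) (b1 (ρ + 1 + s)) (abs_nonneg _) zero_le_one
    have := mul_le_mul (b1 (ρ + 1 - s)) (θa (ρ + 1 + s)) (abs_nonneg _) hM0
    linarith
  have bc2 : ∀ s, |c2 s| ≤ 4 * M ^ 2 := fun s => by
    rw [hc2]
    refine (abs_add_le _ _).trans ((add_le_add_left (abs_sub _ _) _).trans ?_)
    simp only [abs_mul, abs_two]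
    have := mul_le_mul (θa (ρ + 1 - s)) (b2 (ρ + 1 + s)) (abs_nonneg _) zero_le_one
    have := mul_le_mul (b2 (ρ + 1 - s)) (θa (ρ + 1 + s)) (abs_nonneg _) hM0
    have := mul_le_mul (b1 (ρ + 1 - s)) (b1 (ρ + 1 + s)) (abs_nonneg _) hM0
    nlinarith
  have inn : ∀ s, |s| ≤ ρ → c s = 1 ∧ c1 s = 0 ∧ c2 s = 0 := fun s hs => by
    have h := abs_le.1 hs
    have e1 : 1 ≤ ρ + 1 - s := by linarith
    have e2 : 1 ≤ ρ + 1 + s := by linarith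
    simp only [hc, hc1, hc2, smoothTransition.one_of_one_le e1, smoothTransition.one_of_one_le e2,
      (o1 _ e1).1, (o1 _ e1).2, (o1 _ e2).1, (o1 _ e2).2]
    norm_num
  have cR : c (ρ + 1) = 0 ∧ c1 (ρ + 1) = 0 := by simp [hc, hc1, θz, z1 0 le_rfl]
  have cR' : c (-(ρ + 1)) = 0 ∧ c1 (-(ρ + 1)) = 0 := by simp [hc, hc1, θz, z1 0 le_rfl]
  have sqA : ∀ x, |x| ≤ A → x ^ 2 ≤ A ^ 2 := fun x hx => by
    rw [← sq_abs]; exact pow_le_pow_left₀ (abs_nonneg _) hx 2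
  have sqA' : ∀ s x, |x| ≤ A * (c s * E s) → x ^ 2 ≤ (A ^ 2 + exp (2 * δ)) * (c s * E s) ^ 2 := fun s x hx => by
    have : x ^ 2 ≤ (A * (c s * E s)) ^ 2 := by
      rw [← sq_abs]; exact pow_le_pow_left₀ (abs_nonneg _) hx 2
    rw [mul_pow] at this
    exact this.trans (mul_le_mul_of_nonneg_right hK (sq_nonneg _))
  have pMd := mul_nonneg hM0 hδ.le
  have wb : ∀ s, |c1 s * E s + c s * E1 s| ≤ |c1 s| * E s + δ * (c s * E s) := fun s => by
    refine (abs_add_le _ _).trans ?_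
    rw [abs_mul, abs_mul, abs_of_pos (E0 s), abs_of_nonneg (c0 s)]
    have := mul_le_mul_of_nonneg_left (bE1 s) (c0 s)
    linarith
  have wb2 : ∀ s, |c2 s * E s + 2 * (c1 s * E1 s) + c s * E2 s| ≤
      |c2 s| * E s + 2 * (|c1 s| * (δ * E s)) + (δ ^ 2 + δ) * (c s * E s) := fun s => by
    refine (abs_add_le _ _).trans ((add_le_add_left (abs_add_le _ _) _).trans ?_)
    rw [abs_mul, abs_mul 2, abs_mul, abs_mul, abs_of_pos (E0 s), abs_of_nonneg (c0 s), abs_two]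
    have := mul_le_mul_of_nonneg_left (bE2 s) (c0 s)
    have := mul_le_mul_of_nonneg_left (bE1 s) (abs_nonneg (c1 s))
    linarith
  refine ⟨c, c1, fun s => c s * E s, fun s => c1 s * E s + c s * E1 s,
    fun s => c2 s * E s + 2 * (c1 s * E1 s) + c s * E2 s, ⟨sc, dc, cR.1, cR'.1⟩, 
    ⟨sc.mul sE, fun s => (dc s).mul (dE s), by simp [cR.1], by simp only [cR'.1, zero_mul]⟩,
    ⟨(sc1.mul sE).add (sc.mul sE1), fun s => ?_, by simp only [cR.1, cR.2, zero_mul, add_zero],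
      by simp only [cR'.1, cR'.2, zero_mul, add_zero]⟩,
    fun s hs => (inn s hs).1, fun s hs => (inn s hs).2.1, fun s hs => ?_, fun s hs => ?_, 
    fun s hs => ?_, fun s hs => ?_, fun s hs => ?_, fun s => ?_, fun s => ?_, fun s => ?_⟩
  · refine (((dc1 s).mul (dE s)).add ((dc s).mul (dE1 s))).congr_deriv ?_
    ring
  · apply sqA' s
    have := wb s
    rw [(inn s hs).2.1] at this
    simp only [abs_zero, zero_mul, zero_add] at this
    rw [(inn s hs).2.1]
    simp only [zero_mul, zero_add]
    refine this.trans (mul_le_mul_of_nonneg_right ?_ (mul_nonneg (c0 s) (E0 s).le))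
    nlinarith
  · apply sqA' s
    have := wb2 s
    rw [(inn s hs).2.1, (inn s hs).2.2] at this
    simp only [abs_zero, zero_mul, zero_add, mul_zero] at this
    rw [(inn s hs).2.1, (inn s hs).2.2]
    simp only [zero_mul, zero_add, mul_zero]
    refine this.trans (mul_le_mul_of_nonneg_right ?_ (mul_nonneg (c0 s) (E0 s).le))
    nlinarith
  · refine (sqA _ ?_).trans hK
    have := bc1 s
    nlinarith
  · refine (sqA _ ((wb s).trans ?_)).trans hK
    have h1 := l3 s hs
    have h2 := mul_le_mul (bc1 s) h1 (E0 s).le (by linarith)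
    have h3 := mul_le_mul (cle s) h1 (E0 s).le zero_le_one
    have h4 := mul_le_mul_of_nonneg_left h3 hδ.le
    nlinarith
  · refine (sqA _ ((wb2 s).trans ?_)).trans hK
    have h1 := l3 s hs
    have h2 := mul_le_mul (bc2 s) h1 (E0 s).le (by positivity)
    have h3 := mul_le_mul (cle s) h1 (E0 s).le zero_le_one
    have h4 := mul_le_mul_of_nonneg_left h3 (show 0 ≤ δ ^ 2 + δ by positivity)
    have h5 := mul_le_mul (bc1 s) h1 (E0 s).le (by linarith)
    have h6 := mul_le_mul_of_nonneg_left h5 hδ.le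
    linarith
  · exact pow_le_one₀ (c0 s) (cle s)
  · rw [mul_pow]; exact mul_le_mul_of_nonneg_left (l1 s) (sq_nonneg _)
  · rw [mul_pow]
    have h1 := mul_le_mul_of_nonneg_left (l2 s) (sq_nonneg (c s))
    have h2 : 0 ≤ A ^ 2 * (c s ^ 2 * E s ^ 2) := by positivity
    linarith

section compare
variable {E : Type*} [NormedAddCommGroup E] [InnerProductSpace ℝ E]

theorem NN_le_iter (j : ℕ) : ∀ (f : ℝ × ℝ → E), ContDiff ℝ ∞ f → ∀ p,
    NN j f p ≤ 2 ^ j * ‖iteratedFDeriv ℝ j f p‖ ^ 2 := by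
  induction j with
  | zero => intro f hf p; simp [NN]
  | succ j ih =>
    intro f hf p
    have h : ContDiff ℝ ∞ (fderiv ℝ f) := hf.fderiv_right (by simp)
    have key : ∀ a, NN j (DD a f) p ≤ 2 ^ j * ‖iteratedFDeriv ℝ (j + 1) f p‖ ^ 2 := by
      intro a
      refine (ih _ (DD_smooth hf a) p).trans ?_
      refine mul_le_mul_of_nonneg_left ?_ (by positivity)
      refine pow_le_pow_left₀ (norm_nonneg _) ?_ 2
      have := norm_iteratedFDeriv_clm_apply_const (𝕜 := ℝ) (c := eV a) (n := j) (N := ∞)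
        (h.contDiffAt (x := p)) (by exact_mod_cast le_top)
      rw [eV_norm, one_mul, norm_iteratedFDeriv_fderiv] at this
      exact this
    have := key true
    have := key false
    simp only [NN]
    rw [pow_succ (2:ℝ) j]
    linarith

theorem iter_le_NN (j : ℕ) : ∀ (f : ℝ × ℝ → E), ContDiff ℝ ∞ f → ∀ p,
    ‖iteratedFDeriv ℝ j f p‖ ^ 2 ≤ 2 ^ j * NN j f p := by
  induction j with
  | zero => intro f hf p; simp [NN]
  | succ j ih =>
    intro f hf p
    set A : E →L[ℝ] (ℝ × ℝ →L[ℝ] E) :=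
      ContinuousLinearMap.smulRightL ℝ (ℝ × ℝ) E (ContinuousLinearMap.fst ℝ ℝ ℝ) with hA
    set B : E →L[ℝ] (ℝ × ℝ →L[ℝ] E) :=
      ContinuousLinearMap.smulRightL ℝ (ℝ × ℝ) E (ContinuousLinearMap.snd ℝ ℝ ℝ) with hB
    have nA : ‖A‖ ≤ 1 := by
      refine ContinuousLinearMap.opNorm_le_bound _ zero_le_one fun x => ?_
      rw [hA, ContinuousLinearMap.smulRightL_apply_apply, ContinuousLinearMap.norm_smulRight_apply]
      exact mul_le_mul_of_nonneg_right (ContinuousLinearMap.norm_fst_le _ _ _) (norm_nonneg _)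
    have nB : ‖B‖ ≤ 1 := by
      refine ContinuousLinearMap.opNorm_le_bound _ zero_le_one fun x => ?_
      rw [hB, ContinuousLinearMap.smulRightL_apply_apply, ContinuousLinearMap.norm_smulRight_apply]
      exact mul_le_mul_of_nonneg_right (ContinuousLinearMap.norm_snd_le _ _ _) (norm_nonneg _)
    have e : fderiv ℝ f = (A ∘ DD true f) + (B ∘ DD false f) := by
      funext q
      ext
      · simp [hA, hB, DD, eV]
      · simp [hA, hB, DD, eV]
    have sA : ContDiff ℝ ∞ (A ∘ DD true f) := A.contDiff.comp (DD_smooth hf true)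
    have sB : ContDiff ℝ ∞ (B ∘ DD false f) := B.contDiff.comp (DD_smooth hf false)
    have hj : (j : WithTop ℕ∞) ≤ ∞ := by exact_mod_cast le_top
    rw [← norm_iteratedFDeriv_fderiv, e, iteratedFDeriv_add_apply (sA.of_le hj).contDiffAt
      (sB.of_le hj).contDiffAt]
    have h1 := A.norm_iteratedFDeriv_comp_left (n := j) ((DD_smooth hf true).contDiffAt (x := p)) hj
    have h2 := B.norm_iteratedFDeriv_comp_left (n := j) ((DD_smooth hf false).contDiffAt (x := p)) hj
    have h1' := h1.trans (mul_le_mul_of_nonneg_right nA (norm_nonneg _))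
    have h2' := h2.trans (mul_le_mul_of_nonneg_right nB (norm_nonneg _))
    rw [one_mul] at h1' h2'
    have h3 := (norm_add_le (iteratedFDeriv ℝ j (A ∘ DD true f) p)
      (iteratedFDeriv ℝ j (B ∘ DD false f) p)).trans (add_le_add h1' h2')
    have h4 := sq_le_two (norm_nonneg _) h3
    have k1 := ih _ (DD_smooth hf true) p
    have k2 := ih _ (DD_smooth hf false) p
    simp only [NN]
    rw [pow_succ (2:ℝ) j]
    linarith

end compare

/-- bounding by ends -/
def EE (ρ : ℝ) (G : ℝ × ℝ → ℝ) : ℝ :=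
  (∫ p in Icc (-ρ - 1) (-ρ) ×ˢ Icc (0:ℝ) 1, G p) + ∫ p in Icc ρ (ρ + 1) ×ˢ Icc (0:ℝ) 1, G p

theorem II_le_ends {ρ : ℝ} (hρ : 0 < ρ) {G H K : ℝ × ℝ → ℝ} (hG : Continuous G) (hH : Continuous H)
    (hK : Continuous K) (h1 : ∀ p : ℝ × ℝ, |p.1| ≤ ρ → G p ≤ H p)
    (h2 : ∀ p : ℝ × ℝ, ρ ≤ |p.1| → |p.1| ≤ ρ + 1 → G p ≤ H p + K p) :
    II (ρ + 1) G ≤ II (ρ + 1) H + EE ρ K := by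
  set A := Icc (-ρ - 1) (-ρ) ×ˢ Icc (0:ℝ) 1 with hA
  set B := Icc ρ (ρ + 1) ×ˢ Icc (0:ℝ) 1 with hB
  set S := Icc (-(ρ + 1)) (ρ + 1) ×ˢ Icc (0:ℝ) 1 with hS
  have mA : MeasurableSet A := measurableSet_Icc.prod measurableSet_Icc
  have mB : MeasurableSet B := measurableSet_Icc.prod measurableSet_Icc
  have mS : MeasurableSet S := measurableSet_Icc.prod measurableSet_Icc
  have iA : IntegrableOn K A := hK.continuousOn.integrableOn_compact (isCompact_Icc.prod isCompact_Icc)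
  have iB : IntegrableOn K B := hK.continuousOn.integrableOn_compact (isCompact_Icc.prod isCompact_Icc)
  have dj : Disjoint A B := by
    rw [Set.disjoint_left]
    rintro p ⟨hp, _⟩ ⟨hq, _⟩
    have := hp.2
    have := hq.1
    linarith
  have e1 : EE ρ K = ∫ p in A ∪ B, K p := by
    rw [setIntegral_union dj mB iA iB]; rfl
  have sub : A ∪ B ⊆ S := by
    rintro p (⟨⟨h, h'⟩, ht⟩ | ⟨⟨h, h'⟩, ht⟩)
    · exact ⟨⟨by linarith, by linarith⟩, ht⟩
    · exact ⟨⟨by linarith, by linarith⟩, ht⟩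
  have e2 : ∫ p in A ∪ B, K p = ∫ p in S, (A ∪ B).indicator K p := by
    rw [setIntegral_indicator (mA.union mB), inter_eq_right.2 sub]
  have iI : IntegrableOn ((A ∪ B).indicator K) S := (II_int hK).indicator (mA.union mB)
  rw [e1, e2]
  unfold II
  rw [← integral_add (II_int hH) iI]
  refine setIntegral_mono_on (II_int hG) ((II_int hH).add iI) mS ?_
  rintro p ⟨hp, ht⟩
  have hp' : |p.1| ≤ ρ + 1 := abs_le.2 hp
  by_cases hm : p ∈ A ∪ B
  · rw [indicator_of_mem hm]
    apply h2 p _ hp'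
    rcases hm with ⟨hq, _⟩ | ⟨hq, _⟩
    · rw [abs_of_nonpos (by linarith [hq.2])]; linarith [hq.2]
    · rw [abs_of_nonneg (by linarith [hq.1])]; linarith [hq.1]
  · rw [indicator_of_notMem hm, add_zero]
    apply h1
    by_contra hc
    apply hm
    rw [not_le, lt_abs] at hc
    rcases hc with hc | hc
    · right; exact ⟨⟨hc.le, hp.2⟩, ht⟩
    · left; exact ⟨⟨by linarith [hp.1], by linarith⟩, ht⟩

theorem EE_smul {ρ : ℝ} (c : ℝ) (G : ℝ × ℝ → ℝ) : EE ρ (fun p => c * G p) = c * EE ρ G := by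
  unfold EE
  rw [integral_const_mul, integral_const_mul]; ring

theorem EE_nonneg {ρ : ℝ} {G : ℝ × ℝ → ℝ} (h : ∀ p, 0 ≤ G p) : 0 ≤ EE ρ G :=
  add_nonneg (integral_nonneg h) (integral_nonneg h)

theorem arith_core {K Q l a0 a1 a2 a3 D0 D1 D2 b0 b1 b2 : ℝ} (hK : 1 ≤ K) (hQ : 0 ≤ Q) (hl : 0 ≤ l)
    (hs : 24 * K * Q * l ≤ 1) (p0 : 0 ≤ a0) (p1 : 0 ≤ a1) (p2 : 0 ≤ a2) 
    (q0 : 0 ≤ D0) (q1 : 0 ≤ D1) (q2 : 0 ≤ D2)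
    (r0 : 0 ≤ b0) (r1 : 0 ≤ b1) (r2 : 0 ≤ b2) (h0 : a0 ≤ Q * (b0 + D0 + l * a1))
    (h1 : a1 ≤ 16 * D0 + 12 * (K * a0 + K * b0))
    (h2 : a2 ≤ 64 * D1 + 25 * (K * a1 + K * b1))
    (h3 : a3 ≤ 64 * D2 + 25 * (K * a2 + K * b2) + (K * a1 + K * b1)) :
    a0 + a1 + a2 + a3 ≤ 
      ((Q + 2 * (16 + 12 * K + 12 * K * Q)) + 2 * (16 + 12 * K + 12 * K * Q) 
        + (64 + 25 * K * (1 + 2 * (16 + 12 * K + 12 * K * Q)))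
        + (64 + 25 * K * (1 + (64 + 25 * K * (1 + 2 * (16 + 12 * K + 12 * K * Q)))) + 
          K * (1 + 2 * (16 + 12 * K + 12 * K * Q)))) * (D0 + D1 + D2 + b0 + b1 + b2) := by
  have hK0 : 0 ≤ K := by linarith
  set X := D0 + D1 + D2 + b0 + b1 + b2 with hX
  set C1 := 2 * (16 + 12 * K + 12 * K * Q) with hC1
  set C2 := 64 + 25 * K * (1 + C1) with hC2
  have x1 : b0 + D0 ≤ X := by rw [hX]; linarith
  have xX : 0 ≤ X := by linarith
  have hKQ : 0 ≤ K * Q := by positivity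
  have hC10 : 0 ≤ C1 := by rw [hC1]; linarith
  have e0 : a0 ≤ Q * X + Q * l * a1 := by
    have := mul_le_mul_of_nonneg_left x1 hQ; linarith
  have m1 : K * a0 ≤ K * Q * X + K * Q * l * a1 := by
    have := mul_le_mul_of_nonneg_left e0 hK0; linarith
  have m2 : 24 * (K * Q * l * a1) ≤ a1 := by
    have := mul_le_mul_of_nonneg_right hs p1; linarith
  have kb : ∀ b, b ≤ X → K * b ≤ K * X := fun b hb => mul_le_mul_of_nonneg_left hb hK0
  have kb0 := kb b0 (by linarith)
  have kb1 := kb b1 (by linarith)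
  have kb2 := kb b2 (by linarith)
  have f1 : a1 ≤ C1 * X := by
    have d0 : D0 ≤ X := by linarith
    clear_value X
    rw [hC1]; linarith
  have m3 : Q * l * a1 ≤ K * Q * l * a1 := by
    have : 0 ≤ Q * l * a1 := by positivity
    have := mul_le_mul_of_nonneg_right hK this; linarith
  have f0 : a0 ≤ (Q + C1) * X := by linarith
  have g1 := mul_le_mul_of_nonneg_left f1 hK0
  have f2 : a2 ≤ C2 * X := by
    rw [hC2]; linarith
  have g2 := mul_le_mul_of_nonneg_left f2 hK0
  have f3 : a3 ≤ (64 + 25 * K * (1 + C2) + K * (1 + C1)) * X := by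
    clear_value C2
    clear_value C1
    linarith
  linarith

theorem core_est {n : ℕ} {K δ ρ κ0 e L κ : ℝ} (hK : 1 ≤ K) (hρ : 0 < ρ)
    (hκ : 0 < κ0) (hκ1 : κ0 ≤ δ) (hκ2 : κ0 ≤ 2 * π - δ)
    {c c1 w w1 w2 : ℝ → ℝ} (T : Cut K δ ρ c c1 w w1 w2)
    {JJ : ℝ × ℝ → Cn n →L[ℝ] Cn n} {u : ℝ × ℝ → Cn n} (S : Sys (ρ + 1) e L κ (Jstd n) JJ u)
    (hm : ∫ t in (0:ℝ)..1, u (0, t) = 0) (hs : 24 * K * (3 * K / κ0 ^ 2) * κ ^ 2 ≤ 1) :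
    ∃ C, C = ((3 * K / κ0 ^ 2 + 2 * (16 + 12 * K + 12 * K * (3 * K / κ0 ^ 2))) 
        + 2 * (16 + 12 * K + 12 * K * (3 * K / κ0 ^ 2)) 
        + (64 + 25 * K * (1 + 2 * (16 + 12 * K + 12 * K * (3 * K / κ0 ^ 2))))
        + (64 + 25 * K * (1 + (64 + 25 * K * (1 + 2 * (16 + 12 * K + 12 * K * (3 * K / κ0 ^ 2))))) + 
          K * (1 + 2 * (16 + 12 * K + 12 * K * (3 * K / κ0 ^ 2))))) ∧
    II (ρ + 1) (fun p => w p.1 ^ 2 * NN 0 u p) + II (ρ + 1) (fun p => w p.1 ^ 2 * NN 1 u p)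
      + II (ρ + 1) (fun p => w p.1 ^ 2 * NN 2 u p) + II (ρ + 1) (fun p => w p.1 ^ 2 * NN 3 u p)
    ≤ C * (II (ρ + 1) (fun p => NN 0 (CR JJ u) p * exp (2 * δ * (ρ - |p.1|)))
      + II (ρ + 1) (fun p => NN 1 (CR JJ u) p * exp (2 * δ * (ρ - |p.1|)))
      + II (ρ + 1) (fun p => NN 2 (CR JJ u) p * exp (2 * δ * (ρ - |p.1|)))
      + EE ρ (NN 0 u) + EE ρ (NN 1 u) + EE ρ (NN 2 u)) := by
  refine ⟨_, rfl, ?_⟩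
  have hf := CR_smooth S.Js S.us
  have uc := S.us.continuous
  have wc := T.pw.sm.continuous
  have w1c := T.pw.cont'
  have w2c := T.pw1.cont'
  have cc := T.pc.sm.continuous
  have c1c := T.pc.cont'
  have nu := fun j => (NN_smooth j u S.us).continuous
  have nf := fun j => (NN_smooth j _ hf).continuous
  have hK0 : 0 ≤ K := by linarith
  have Dle : ∀ j, II (ρ + 1) (fun p => w p.1 ^ 2 * NN j (CR JJ u) p) ≤
      II (ρ + 1) (fun p => NN j (CR JJ u) p * exp (2 * δ * (ρ - |p.1|))) := by
    intro j
    have := nf j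
    refine II_mono (by fun_prop) (by fun_prop) fun p _ => ?_
    rw [mul_comm]
    refine mul_le_mul_of_nonneg_left ((T.le1 p.1).trans ?_) (NN_nonneg _ _ _)
    exact mul_le_of_le_one_left (exp_pos _).le (T.c01 p.1)
  have W1 : ∀ j, II (ρ + 1) (fun p => w1 p.1 ^ 2 * NN j u p) ≤
      K * II (ρ + 1) (fun p => w p.1 ^ 2 * NN j u p) + K * EE ρ (NN j u) := by
    intro j
    have := nu j
    rw [← II_smul, ← EE_smul]
    refine II_le_ends hρ (by fun_prop) (by fun_prop) (by fun_prop) ?_ ?_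
    · intro p hp
      rw [← mul_assoc]
      exact mul_le_mul_of_nonneg_right (T.in2 _ hp) (NN_nonneg _ _ _)
    · intro p hp _
      have h1 := mul_le_mul_of_nonneg_right (T.en2 _ hp) (NN_nonneg j u p)
      have h2 : 0 ≤ K * (w p.1 ^ 2 * NN j u p) := mul_nonneg hK0 (mul_nonneg (sq_nonneg _) (NN_nonneg _ _ _))
      linarith
  have W2 : ∀ j, II (ρ + 1) (fun p => w2 p.1 ^ 2 * NN j u p) ≤
      K * II (ρ + 1) (fun p => w p.1 ^ 2 * NN j u p) + K * EE ρ (NN j u) := by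
    intro j
    have := nu j
    rw [← II_smul, ← EE_smul]
    refine II_le_ends hρ (by fun_prop) (by fun_prop) (by fun_prop) ?_ ?_
    · intro p hp
      rw [← mul_assoc]
      exact mul_le_mul_of_nonneg_right (T.in3 _ hp) (NN_nonneg _ _ _)
    · intro p hp _
      have h1 := mul_le_mul_of_nonneg_right (T.en3 _ hp) (NN_nonneg j u p)
      have h2 : 0 ≤ K * (w p.1 ^ 2 * NN j u p) := mul_nonneg hK0 (mul_nonneg (sq_nonneg _) (NN_nonneg _ _ _))
      linarith
  have l0 := level0 S T.pw
  have l1 := level1 S T.pw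
  have l2 := level2 S T.pw T.pw1
  have f0 : κ0 ^ 2 * II (ρ + 1) (fun p => w p.1 ^ 2 * NN 0 u p) ≤
      3 * K * (EE ρ (NN 0 u) + II (ρ + 1) (fun p => NN 0 (CR JJ u) p * exp (2 * δ * (ρ - |p.1|)))
        + κ ^ 2 * II (ρ + 1) (fun p => w p.1 ^ 2 * NN 1 u p)) := by
    have sv : ContDiff ℝ ∞ (fun p : ℝ × ℝ => c p.1 • u p) := T.pc.smp.smul S.us
    have est := fourier_estV (R := ρ + 1) (δ := δ) S.hR hκ hκ1 hκ2 sv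
      (fun s t => by simp only [S.up s t]) (fun t => by simp [T.pc.z0]) 
      (fun t => by simp only [T.pc.z1, zero_smul]) 
      (by simp only [T.in0 0 (by simpa using hρ.le), one_smul]; exact hm)
    have est2 := mul_le_mul_of_nonneg_left est (exp_pos (2 * δ * ρ)).le
    have ex : ∀ p : ℝ × ℝ, exp (2 * δ * ρ) * exp (-(2 * δ * |p.1|)) = exp (2 * δ * (ρ - |p.1|)) := fun p => by
      rw [← exp_add]; congr 1; ring
    have t1 : κ0 ^ 2 * II (ρ + 1) (fun p => w p.1 ^ 2 * NN 0 u p) ≤ exp (2 * δ * ρ) *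
        (κ0 ^ 2 * II (ρ + 1) (fun p => ‖c p.1 • u p‖ ^ 2 * exp (-(2 * δ * |p.1|)))) := by
      rw [mul_left_comm, ← II_smul (exp _)]
      refine mul_le_mul_of_nonneg_left ?_ (sq_nonneg _)
      have := nu 0
      refine II_mono (by fun_prop) (by fun_prop) fun p _ => ?_
      rw [mul_left_comm, ex, norm_smul, mul_pow, Real.norm_eq_abs, sq_abs]
      have := mul_le_mul_of_nonneg_right (T.le1 p.1) (NN_nonneg 0 u p)
      have e0 : NN 0 u p = ‖u p‖ ^ 2 := rfl
      rw [e0] at this ⊢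
      linarith
    refine t1.trans (est2.trans ?_)
    have d1 := (DD_smooth sv true).continuous
    have d2 := (DD_smooth sv false).continuous
    have n0 := nu 0
    have n1 := nu 1
    have nf0 := nf 0
    have t2 : II (ρ + 1) (fun p => exp (2 * δ * ρ) * (‖DD true (fun p => c p.1 • u p) p +
        Jstd n (DD false (fun p => c p.1 • u p) p)‖ ^ 2 * exp (-(2 * δ * |p.1|)))) ≤
        II (ρ + 1) (fun p => 3 * K * (NN 0 (CR JJ u) p * exp (2 * δ * (ρ - |p.1|)))
         + 3 * K * κ ^ 2 * (w p.1 ^ 2 * NN 1 u p)) + EE ρ (fun p => 3 * K * NN 0 u p) := by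
      have pt : ∀ p : ℝ × ℝ, |p.1| ≤ ρ + 1 → exp (2 * δ * ρ) * (‖DD true (fun p => c p.1 • u p) p +
        Jstd n (DD false (fun p => c p.1 • u p) p)‖ ^ 2 * exp (-(2 * δ * |p.1|))) ≤
        (3 * K * (NN 0 (CR JJ u) p * exp (2 * δ * (ρ - |p.1|)))
         + 3 * K * κ ^ 2 * (w p.1 ^ 2 * NN 1 u p)) +
         3 * (c1 p.1 ^ 2 * exp (2 * δ * (ρ - |p.1|))) * NN 0 u p := by
        intro p hp
        rw [mul_left_comm, ex, DD_smul T.pc.smp S.us, DD_smul T.pc.smp S.us, DD_fst T.pc.der,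
          DD_fst T.pc.der]
        simp only [if_true, Bool.false_eq_true, if_false, zero_smul, add_zero]
        have e1 : c p.1 • DD true u p + c1 p.1 • u p + Jstd n (c p.1 • DD false u p) =
          c1 p.1 • u p + c p.1 • CR JJ u p - c p.1 • (JJ p - Jstd n) (DD false u p) := by
          rw [map_smul, CR, ContinuousLinearMap.sub_apply, smul_add, smul_sub]; abel
        rw [e1]
        set E := exp (2 * δ * (ρ - |p.1|)) with hE
        have E0 : 0 < E := exp_pos _
        set x := c1 p.1 • u p
        set y := c p.1 • CR JJ u p
        set z := c p.1 • (JJ p - Jstd n) (DD false u p)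
        have h3 : ‖x + y - z‖ ^ 2 ≤ 3 * ‖x‖ ^ 2 + 3 * ‖y‖ ^ 2 + 3 * ‖z‖ ^ 2 := by
          have a1 : ‖x + y - z‖ ≤ ‖x‖ + ‖y‖ + ‖z‖ := (norm_sub_le _ _).trans (by linarith [norm_add_le x y])
          have a2 := pow_le_pow_left₀ (norm_nonneg _) a1 2
          nlinarith [sq_nonneg (‖x‖ - ‖y‖), sq_nonneg (‖x‖ - ‖z‖), sq_nonneg (‖y‖ - ‖z‖)]
        have hx : ‖x‖ ^ 2 = c1 p.1 ^ 2 * NN 0 u p := by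
          simp only [x, norm_smul, mul_pow, Real.norm_eq_abs, sq_abs, NN]
        have hy : ‖y‖ ^ 2 = c p.1 ^ 2 * NN 0 (CR JJ u) p := by
          simp only [y, norm_smul, mul_pow, Real.norm_eq_abs, sq_abs, NN]
        have hz : ‖z‖ ^ 2 ≤ c p.1 ^ 2 * (κ ^ 2 * NN 1 u p) := by
          simp only [z, norm_smul, mul_pow, Real.norm_eq_abs, sq_abs]
          refine mul_le_mul_of_nonneg_left ?_ (sq_nonneg _)
          have a1 : ‖(JJ p - Jstd n) (DD false u p)‖ ≤ κ * √(NN 1 u p) :=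
            ((JJ p - Jstd n).le_opNorm _).trans (mul_le_mul (S.Jκ p hp) (le_sqrt_NN1 u false p)
              (norm_nonneg _) ((norm_nonneg _).trans (S.Jκ p hp)))
          have a2 := pow_le_pow_left₀ (norm_nonneg _) a1 2
          rwa [mul_pow, Real.sq_sqrt (NN_nonneg _ _ _)] at a2
        have k1 := mul_le_mul_of_nonneg_right h3 E0.le
        rw [hx, hy] at k1
        have k2 : ‖z‖ ^ 2 * E ≤ K * κ ^ 2 * (w p.1 ^ 2 * NN 1 u p) := by
          have b1 := mul_le_mul_of_nonneg_right hz E0.le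
          have b2 := mul_le_mul_of_nonneg_right (T.le2 p.1) 
            (mul_nonneg (sq_nonneg κ) (NN_nonneg 1 u p))
          linarith
        have k3 : c p.1 ^ 2 * (NN 0 (CR JJ u) p * E) ≤ K * (NN 0 (CR JJ u) p * E) :=
          mul_le_mul_of_nonneg_right ((T.c01 _).trans hK) (mul_nonneg (NN_nonneg _ _ _) E0.le)
        linarith
      refine II_le_ends hρ (by fun_prop) (by fun_prop) (by fun_prop) ?_ ?_
      · intro p hp
        have := pt p (by linarith)
        rw [T.in1 _ hp] at this
        simpa using this
      · intro p hp hp'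
        refine (pt p hp').trans ?_
        have h1 : exp (2 * δ * (ρ - |p.1|)) ≤ 1 := by
          rw [exp_le_one_iff]
          exact mul_nonpos_of_nonneg_of_nonpos (by linarith) (by linarith)
        have h2 : c1 p.1 ^ 2 * exp (2 * δ * (ρ - |p.1|)) ≤ K * 1 :=
          mul_le_mul (T.en1 _ hp) h1 (exp_pos _).le hK0
        have := mul_le_mul_of_nonneg_right h2 (NN_nonneg 0 u p)
        linarith
    rw [II_smul, EE_smul, II_add (by fun_prop) (by fun_prop), II_smul, II_smul] at t2
    linarith
  refine arith_core hK (by positivity) (sq_nonneg κ) hs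
    (II_nonneg fun p => mul_nonneg (sq_nonneg _) (NN_nonneg _ _ _))
    (II_nonneg fun p => mul_nonneg (sq_nonneg _) (NN_nonneg _ _ _))
    (II_nonneg fun p => mul_nonneg (sq_nonneg _) (NN_nonneg _ _ _))
    (II_nonneg fun p => mul_nonneg (NN_nonneg _ _ _) (exp_pos _).le)
    (II_nonneg fun p => mul_nonneg (NN_nonneg _ _ _) (exp_pos _).le)
    (II_nonneg fun p => mul_nonneg (NN_nonneg _ _ _) (exp_pos _).le)
    (EE_nonneg fun p => NN_nonneg _ _ _) (EE_nonneg fun p => NN_nonneg _ _ _)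
    (EE_nonneg fun p => NN_nonneg _ _ _) ?_ ?_ ?_ ?_
  · rw [div_mul_eq_mul_div, le_div_iff₀ (by positivity)]
    linarith
  · linarith [Dle 0, W1 0]
  · linarith [Dle 1, W1 1]
  · linarith [Dle 2, W1 2, W2 1]

theorem DD_comp {E F : Type*} [NormedAddCommGroup E] [NormedSpace ℝ E] [NormedAddCommGroup F]
    [NormedSpace ℝ F] {G : E → F} (hG : ContDiff ℝ ∞ G) {u : ℝ × ℝ → E} (hu : ContDiff ℝ ∞ u)
    (a : Bool) (p : ℝ × ℝ) : DD a (fun q => G (u q)) p = fderiv ℝ G (u p) (DD a u p) := by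
  have h1 : DifferentiableAt ℝ G (u p) := hG.differentiable (by simp) _
  have := fderiv_comp p h1 (sm_diff hu p)
  have h2 : (fun q => G (u q)) = G ∘ u := rfl
  rw [DD, h2, this]
  rfl

theorem Jstd_norm (n : ℕ) (x : Cn n) : ‖Jstd n x‖ = ‖x‖ := by
  have : Jstd n x = Complex.I • x := by simp [Jstd]
  rw [this, norm_smul, Complex.norm_I, one_mul]

theorem Jstd_anti (n : ℕ) (x y : Cn n) : inner ℝ (Jstd n x) y = - inner ℝ x (Jstd n y) := by
  have h : ∀ x : Cn n, Jstd n x = Complex.I • x := fun x => by simp [Jstd]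
  rw [h, h, PiLp.inner_apply, PiLp.inner_apply, ← Finset.sum_neg_distrib]
  refine Finset.sum_congr rfl fun i _ => ?_
  simp only [PiLp.smul_apply, smul_eq_mul, Complex.inner, Complex.mul_re, Complex.mul_im,
    Complex.conj_re, Complex.conj_im, Complex.I_re, Complex.I_im]
  ring

theorem fd_bound {E : Type*} [NormedAddCommGroup E] [InnerProductSpace ℝ E] [ProperSpace E]
    {F : Type*} [NormedAddCommGroup F] [NormedSpace ℝ F] {J : E → F} (hJs : ContDiff ℝ ∞ J) :
    ∃ A, ∀ x ∈ Metric.closedBall (0 : E) 1, ‖fderiv ℝ J x‖ ≤ A := by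
  have h1 : ContDiff ℝ ∞ (fderiv ℝ J) := hJs.fderiv_right (by simp)
  have hc : IsCompact (Metric.closedBall (0 : E) 1) := isCompact_closedBall _ _
  exact hc.exists_bound_of_continuousOn h1.continuous.continuousOn

theorem J_bounds {E : Type*} [NormedAddCommGroup E] [InnerProductSpace ℝ E] [ProperSpace E]
    {F : Type*} [NormedAddCommGroup F] [NormedSpace ℝ F]
    {J : E → F} (hJs : ContDiff ℝ ∞ J) :
    ∃ L : ℝ, 0 ≤ L ∧ ∀ x, ‖x‖ ≤ 1 → ‖fderiv ℝ J x‖ ≤ L ∧ (∀ y, ‖fderiv ℝ (fderiv ℝ J) x y‖ ≤ L * ‖y‖) ∧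
      ‖J x - J 0‖ ≤ L * ‖x‖ := by
  have h1 : ContDiff ℝ ∞ (fderiv ℝ J) := hJs.fderiv_right (by simp)
  obtain ⟨A, hA⟩ := fd_bound hJs
  obtain ⟨B, hB⟩ := fd_bound h1
  refine ⟨max (max A B) 0, le_max_right _ _, fun x hx => ?_⟩
  have hx' : x ∈ Metric.closedBall (0 : E) 1 := by simpa using hx
  refine ⟨(hA x hx').trans ((le_max_left _ _).trans (le_max_left _ _)),
    fun y => (ContinuousLinearMap.le_opNorm _ _).trans (mul_le_mul_of_nonneg_right
      ((hB x hx').trans ((le_max_right _ _).trans (le_max_left _ _))) (norm_nonneg _)), ?_⟩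
  have := (convex_closedBall (0 : E) 1).norm_image_sub_le_of_norm_fderiv_le (𝕜 := ℝ) (f := J)
    (C := max (max A B) 0) (x := 0) (y := x)
    (fun y _ => hJs.differentiable (by simp) y)
    (fun y hy => (hA y hy).trans ((le_max_left _ _).trans (le_max_left _ _)))
    (by simp) hx'
  simpa using this

theorem NN_sub_const {E : Type*} [NormedAddCommGroup E] [InnerProductSpace ℝ E] (j : ℕ)
    (f : ℝ × ℝ → E) (c : E) : NN (j + 1) (fun p => f p - c) = NN (j + 1) f := by
  funext p
  simp only [NN, DD_sub_const]

theorem mk_sys {E : Type*} [NormedAddCommGroup E] [InnerProductSpace ℝ E]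
    {J0 : E →L[ℝ] E} (Jn : ∀ x, ‖J0 x‖ = ‖x‖) (Ja : ∀ x y, inner ℝ (J0 x) y = - inner ℝ x (J0 y))
    {J : E → (E →L[ℝ] E)} (hJs : ContDiff ℝ ∞ J) (hJ0 : J 0 = J0)
    {L ε ρ : ℝ} (hL : 0 ≤ L) (hb : ∀ x, ‖x‖ ≤ 1 → ‖fderiv ℝ J x‖ ≤ L ∧
      (∀ y, ‖fderiv ℝ (fderiv ℝ J) x y‖ ≤ L * ‖y‖) ∧ ‖J x - J 0‖ ≤ L * ‖x‖) (hρ : 0 < ρ) (hε : 0 < ε)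
    (hε1 : 2 * ε ≤ 1) (hLε : 80000000000 * (L * ε) ^ 2 ≤ 1) {u : ℝ × ℝ → E}
    (us : ContDiff ℝ ∞ u) (up : Per u) (hu : ∀ p : ℝ × ℝ, |p.1| ≤ ρ + 1 → ‖u p‖ < ε)
    {c : E} (hc : ‖c‖ ≤ ε) :
    Sys (ρ + 1) (2 * ε) L (L * ε) J0 (fun p => J (u p)) (fun p => u p - c) := by
  have hu1 : ∀ p : ℝ × ℝ, |p.1| ≤ ρ + 1 → ‖u p‖ ≤ 1 := fun p hp => by linarith [hu p hp]
  have h1 : ContDiff ℝ ∞ (fderiv ℝ J) := hJs.fderiv_right (by simp)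
  refine ⟨by linarith, Jn, Ja, us.sub contDiff_const,
    fun s t => by simp only [up s t], hJs.comp us, ?_, by nlinarith [sq_nonneg (L * ε)], ?_, ?_, ?_, hL,
    by linarith, hε1, by linarith⟩
  · intro p hp
    exact (norm_sub_le _ _).trans (by linarith [hu p hp])
  · intro p hp
    rw [← hJ0]
    exact ((hb _ (hu1 p hp)).2.2).trans (mul_le_mul_of_nonneg_left (hu p hp).le hL)
  · intro p a hp
    rw [NN_sub_const, DD_comp hJs us]
    exact (ContinuousLinearMap.le_opNorm _ _).trans
      (mul_le_mul (hb _ (hu1 p hp)).1 (le_sqrt_NN1 u a p) (norm_nonneg _) hL)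
  · intro p a b hp
    rw [NN_sub_const, NN_sub_const]
    have e : DD b (fun q => J (u q)) = fun q => fderiv ℝ J (u q) (DD b u q) := by
      funext q; exact DD_comp hJs us b q
    rw [e, DD_clm_apply (f := fun q => fderiv ℝ J (u q)) (h1.comp us) (DD_smooth us b),
      DD_comp h1 us]
    obtain ⟨b1, b2, -⟩ := hb _ (hu1 p hp)
    have k1 : ‖fderiv ℝ J (u p) (DD a (DD b u) p)‖ ≤ L * √(NN 2 u p) :=
      (ContinuousLinearMap.le_opNorm _ _).trans
        (mul_le_mul b1 (le_sqrt_NN2 u a b p) (norm_nonneg _) hL)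
    have k2 : ‖fderiv ℝ (fderiv ℝ J) (u p) (DD a u p)‖ ≤ L * √(NN 1 u p) :=
      (b2 _).trans (mul_le_mul_of_nonneg_left (le_sqrt_NN1 u a p) hL)
    have k3 : ‖(fderiv ℝ (fderiv ℝ J) (u p) (DD a u p)) (DD b u p)‖ ≤
        L * √(NN 1 u p) * √(NN 1 u p) :=
      (ContinuousLinearMap.le_opNorm _ _).trans
        (mul_le_mul k2 (le_sqrt_NN1 u b p) (norm_nonneg _) (mul_nonneg hL (sqrt_nonneg _)))
    rw [mul_assoc, Real.mul_self_sqrt (NN_nonneg _ _ _)] at k3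
    refine (norm_add_le _ _).trans ?_
    linarith

theorem dbarJ_eq {n : ℕ} (J : Cn n → (Cn n →L[ℝ] Cn n)) (u : ℝ × ℝ → Cn n) :
    dbarJ J u = fun p => (2⁻¹ : ℝ) • CR (fun p => J (u p)) u p := by
  funext p
  simp [dbarJ, CR, pdS, pdT, DD, eV]

theorem int_box {a b : ℝ} {G : ℝ × ℝ → ℝ} (hG : Continuous G) :
    IntegrableOn G (Icc a b ×ˢ Icc (0:ℝ) 1) :=
  hG.continuousOn.integrableOn_compact (isCompact_Icc.prod isCompact_Icc)

theorem iter_cont {n : ℕ} {f : ℝ × ℝ → Cn n} (hf : ContDiff ℝ ∞ f) (j : ℕ) :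
    Continuous (fun p => ‖iteratedFDeriv ℝ j f p‖ ^ 2) :=
  ((hf.continuous_iteratedFDeriv (m := j) (by exact_mod_cast le_top)).norm.pow 2)

/-- the top weighted norm -/
theorem hat_le {n : ℕ} {K δ ρ : ℝ} (hK : 1 ≤ K) {c c1 w w1 w2 : ℝ → ℝ} (T : Cut K δ ρ c c1 w w1 w2)
    {v : ℝ × ℝ → Cn n} (hv : ContDiff ℝ ∞ v) :
    hatNorm 3 δ ρ v (Icc (-ρ) ρ ×ˢ Icc (0:ℝ) 1) ^ 2 ≤ 8 * K *
      (II (ρ + 1) (fun p => w p.1 ^ 2 * NN 0 v p) + II (ρ + 1) (fun p => w p.1 ^ 2 * NN 1 v p)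
      + II (ρ + 1) (fun p => w p.1 ^ 2 * NN 2 v p) + II (ρ + 1) (fun p => w p.1 ^ 2 * NN 3 v p)) := by
  have wc := T.pw.sm.continuous
  have c0 := (NN_smooth 0 v hv).continuous
  have c1 := (NN_smooth 1 v hv).continuous
  have c2 := (NN_smooth 2 v hv).continuous
  have c3 := (NN_smooth 3 v hv).continuous
  have i0 := iter_cont hv 0
  have i1 := iter_cont hv 1
  have i2 := iter_cont hv 2
  have i3 := iter_cont hv 3
  unfold hatNorm
  rw [Real.sq_sqrt (integral_nonneg fun p =>
    mul_nonneg (Finset.sum_nonneg fun _ _ => sq_nonneg _) (exp_pos _).le)]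
  rw [← II_add (by fun_prop) (by fun_prop), ← II_add (by fun_prop) (by fun_prop),
    ← II_add (by fun_prop) (by fun_prop), ← II_smul]
  set H : ℝ × ℝ → ℝ := fun p => 8 * K * (w p.1 ^ 2 * NN 0 v p + w p.1 ^ 2 * NN 1 v p +
    w p.1 ^ 2 * NN 2 v p + w p.1 ^ 2 * NN 3 v p) with hH
  have Hc : Continuous H := by fun_prop
  have H0 : ∀ p, 0 ≤ H p := fun p => by
    have := NN_nonneg 0 v p
    have := NN_nonneg 1 v p
    have := NN_nonneg 2 v p
    have := NN_nonneg 3 v p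
    have : 0 ≤ K := by linarith
    simp only [hH]; positivity
  have s1 : ∫ p in Icc (-ρ) ρ ×ˢ Icc (0:ℝ) 1, (∑ j ∈ Finset.range (3 + 1),
      ‖iteratedFDeriv ℝ j v p‖ ^ 2) * exp (2 * δ * (ρ - |p.1|)) ≤
      ∫ p in Icc (-ρ) ρ ×ˢ Icc (0:ℝ) 1, H p := by
    refine setIntegral_mono_on (int_box ?_) (int_box Hc)
      (measurableSet_Icc.prod measurableSet_Icc) ?_
    · simp only [Finset.sum_range_succ, Finset.range_zero, Finset.sum_empty]
      fun_prop
    · intro p hp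
      have hp' : |p.1| ≤ ρ := abs_le.2 hp.1
      have le := T.le2 p.1
      rw [T.in0 _ hp', one_pow, one_mul] at le
      have t0 := iter_le_NN 0 v hv p
      have t1 := iter_le_NN 1 v hv p
      have t2 := iter_le_NN 2 v hv p
      have t3 := iter_le_NN 3 v hv p
      have n0 := NN_nonneg 0 v p
      have n1 := NN_nonneg 1 v p
      have n2 := NN_nonneg 2 v p
      have n3 := NN_nonneg 3 v p
      have s : ∑ j ∈ Finset.range (3 + 1), ‖iteratedFDeriv ℝ j v p‖ ^ 2 ≤
          8 * (NN 0 v p + NN 1 v p + NN 2 v p + NN 3 v p) := by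
        simp only [Finset.sum_range_succ, Finset.range_zero, Finset.sum_empty]
        linarith
      refine (mul_le_mul s le (exp_pos _).le (by positivity)).trans (le_of_eq ?_)
      simp only [hH]; ring
  refine s1.trans ?_
  refine setIntegral_mono_set (II_int Hc) (ae_of_all _ H0) (LE.le.eventuallyLE ?_)
  rintro p ⟨⟨h, h'⟩, ht⟩
  exact ⟨⟨by linarith, by linarith⟩, ht⟩

theorem hat_ge {n : ℕ} {δ ρ : ℝ} {J : Cn n → (Cn n →L[ℝ] Cn n)} (hJs : ContDiff ℝ ∞ J)
    {u : ℝ × ℝ → Cn n} (hu : ContDiff ℝ ∞ u) :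
    II (ρ + 1) (fun p => NN 0 (CR (fun p => J (u p)) u) p * exp (2 * δ * (ρ - |p.1|)))
      + II (ρ + 1) (fun p => NN 1 (CR (fun p => J (u p)) u) p * exp (2 * δ * (ρ - |p.1|)))
      + II (ρ + 1) (fun p => NN 2 (CR (fun p => J (u p)) u) p * exp (2 * δ * (ρ - |p.1|))) ≤
    16 * hatNorm 2 δ ρ (dbarJ J u) (Icc (-ρ - 1) (ρ + 1) ×ˢ Icc (0:ℝ) 1) ^ 2 := by
  have hv : ContDiff ℝ ∞ (CR (fun p => J (u p)) u) := CR_smooth (hJs.comp hu) hu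
  have hd : ContDiff ℝ ∞ (dbarJ J u) := by rw [dbarJ_eq]; exact hv.const_smul (2⁻¹ : ℝ)
  set v := CR (fun p => J (u p)) u with hvdef
  have c0 := (NN_smooth 0 v hv).continuous
  have c1 := (NN_smooth 1 v hv).continuous
  have c2 := (NN_smooth 2 v hv).continuous
  have i0 := iter_cont hd 0
  have i1 := iter_cont hd 1
  have i2 := iter_cont hd 2
  unfold hatNorm
  rw [Real.sq_sqrt (integral_nonneg fun p =>
    mul_nonneg (Finset.sum_nonneg fun _ _ => sq_nonneg _) (exp_pos _).le)]
  rw [← II_add (by fun_prop) (by fun_prop), ← II_add (by fun_prop) (by fun_prop)]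
  have e : Icc (-ρ - 1) (ρ + 1) ×ˢ Icc (0:ℝ) 1 = Icc (-(ρ + 1)) (ρ + 1) ×ˢ Icc (0:ℝ) 1 := by
    congr 2; ring
  rw [e]
  refine le_trans (II_mono (by fun_prop) (H := fun p => 16 * ((∑ j ∈ Finset.range (2 + 1),
      ‖iteratedFDeriv ℝ j (dbarJ J u) p‖ ^ 2) * exp (2 * δ * (ρ - |p.1|)))) ?_ fun p _ => ?_) ?_
  · simp only [Finset.sum_range_succ, Finset.range_zero, Finset.sum_empty]
    fun_prop
  · have key : ∀ j, ‖iteratedFDeriv ℝ j v p‖ ^ 2 = 4 * ‖iteratedFDeriv ℝ j (dbarJ J u) p‖ ^ 2 := by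
      intro j
      have hj : (j : WithTop ℕ∞) ≤ ∞ := by exact_mod_cast le_top
      have : dbarJ J u = (2⁻¹ : ℝ) • v := dbarJ_eq J u
      rw [this, iteratedFDeriv_const_smul_apply (hv.of_le hj).contDiffAt, norm_smul, mul_pow]
      norm_num
      ring
    have t0 := NN_le_iter 0 v hv p
    have t1 := NN_le_iter 1 v hv p
    have t2 := NN_le_iter 2 v hv p
    rw [key] at t0 t1 t2
    rw [← add_mul, ← add_mul, ← mul_assoc]
    refine mul_le_mul_of_nonneg_right ?_ (exp_pos _).le
    simp only [Finset.sum_range_succ, Finset.range_zero, Finset.sum_empty]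
    have n0 := sq_nonneg ‖iteratedFDeriv ℝ 0 (dbarJ J u) p‖
    have n1 := sq_nonneg ‖iteratedFDeriv ℝ 1 (dbarJ J u) p‖
    have n2 := sq_nonneg ‖iteratedFDeriv ℝ 2 (dbarJ J u) p‖
    linarith
  · rw [II_smul]; rfl

theorem sob_ge {n : ℕ} {a b : ℝ} {v : ℝ × ℝ → Cn n} (hv : ContDiff ℝ ∞ v) :
    (∫ p in Icc a b ×ˢ Icc (0:ℝ) 1, NN 0 v p) + (∫ p in Icc a b ×ˢ Icc (0:ℝ) 1, NN 1 v p)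
      + (∫ p in Icc a b ×ˢ Icc (0:ℝ) 1, NN 2 v p) ≤
    4 * sobNorm 2 v (Icc a b ×ˢ Icc (0:ℝ) 1) ^ 2 := by
  have c0 := (NN_smooth 0 v hv).continuous
  have c1 := (NN_smooth 1 v hv).continuous
  have c2 := (NN_smooth 2 v hv).continuous
  have i0 := iter_cont hv 0
  have i1 := iter_cont hv 1
  have i2 := iter_cont hv 2
  unfold sobNorm
  rw [Real.sq_sqrt (integral_nonneg fun p => Finset.sum_nonneg fun _ _ => sq_nonneg _)]
  rw [← integral_add (int_box c0) (int_box c1),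
    ← integral_add (f := fun p => NN 0 v p + NN 1 v p) (int_box (c0.add c1)) (int_box c2), ← integral_const_mul]
  refine setIntegral_mono_on (int_box (by fun_prop)) (int_box ?_)
      (measurableSet_Icc.prod measurableSet_Icc) ?_
  · simp only [Finset.sum_range_succ, Finset.range_zero, Finset.sum_empty]
    exact continuous_const.mul (((continuous_const.add i0).add i1).add i2)
  · intro p _
    have t0 := NN_le_iter 0 v hv p
    have t1 := NN_le_iter 1 v hv p
    have t2 := NN_le_iter 2 v hv p
    simp only [Finset.sum_range_succ, Finset.range_zero, Finset.sum_empty]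
    have n0 := sq_nonneg ‖iteratedFDeriv ℝ 0 v p‖
    have n1 := sq_nonneg ‖iteratedFDeriv ℝ 1 v p‖
    linarith

theorem stmt_16 (n : ℕ) (hn : 1 ≤ n) (δ : ℝ) (hδ0 : 0 < δ) (hδ2 : δ < 2 * π)
    (J : Cn n → (Cn n →L[ℝ] Cn n)) (hJs : ContDiff ℝ (⊤ : ℕ∞) J) (hJ0 : J 0 = Jstd n)
    (hJsq : ∀ x, J x * J x = -1) :
    ∃ ε > 0, ∃ C > 0, ∀ ρ : ℝ, 0 < ρ →
      ∀ u : ℝ × ℝ → Cn n, ContDiff ℝ (⊤ : ℕ∞) u → (∀ s t : ℝ, u (s, t + 1) = u (s, t)) →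
      (∀ p : ℝ × ℝ, |p.1| ≤ ρ + 1 → ‖u p‖ < ε) →
      hatNorm 1 δ ρ (dbarJ J u) (Icc (-ρ - 1) (ρ + 1) ×ˢ Icc (0:ℝ) 1) < ε →
      ∃ c : Cn n, ‖c‖ ≤ ε ∧
        hatNorm 3 δ ρ (fun p => u p - c) (Icc (-ρ) ρ ×ˢ Icc (0:ℝ) 1) ≤
          C * (hatNorm 2 δ ρ (dbarJ J u) (Icc (-ρ - 1) (ρ + 1) ×ˢ Icc (0:ℝ) 1)
            + sobNorm 2 (fun p => u p - c) (Icc (-ρ - 1) (-ρ) ×ˢ Icc (0:ℝ) 1)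
            + sobNorm 2 (fun p => u p - c) (Icc ρ (ρ + 1) ×ˢ Icc (0:ℝ) 1)) := by
  obtain ⟨K, hK, hcut⟩ := exists_cut δ hδ0
  obtain ⟨L, hL, hb⟩ := J_bounds hJs
  set κ0 := min δ (2 * π - δ) with hκ0
  have k0 : 0 < κ0 := lt_min hδ0 (by linarith)
  have k1 : κ0 ≤ δ := min_le_left _ _
  have k2 : κ0 ≤ 2 * π - δ := min_le_right _ _
  clear_value κ0
  set Q := 3 * K / κ0 ^ 2 with hQ
  have Q0 : 0 ≤ Q := by positivity
  have hKQ : 0 ≤ K * Q := by positivity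
  set ε := 1 / (1000000 * (1 + L) * (1 + K * Q)) with hε
  have ε0 : 0 < ε := by positivity
  have εe : ε * (1000000 * (1 + L) * (1 + K * Q)) = 1 := by
    rw [hε]; field_simp
  have hLK : 0 ≤ L * (K * Q) := by positivity
  have z1 : 0 ≤ ε * L := by positivity
  have z2 : 0 ≤ ε * (K * Q) := by positivity
  have z3 : 0 ≤ ε * (L * (K * Q)) := by positivity
  have a1 : 2 * ε ≤ 1 := by linarith
  have a2 : 1000000 * (L * ε) ≤ 1 := by linarith
  have a3 : 1000000 * ((K * Q) * (L * ε)) ≤ 1 := by linarith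
  have y1 : 0 ≤ L * ε := by positivity
  have a4 : 80000000000 * (L * ε) ^ 2 ≤ 1 := by
    have := mul_le_mul a2 a2 (by positivity) zero_le_one
    linarith
  have a5 : 24 * K * Q * (L * ε) ^ 2 ≤ 1 := by
    have := mul_le_mul a3 a2 (by positivity) zero_le_one
    have : 0 ≤ (K * Q) * (L * ε) * (L * ε) := by positivity
    linarith
  clear_value ε
  have hcore : ∃ C, 0 ≤ C ∧ ∀ ρ : ℝ, 0 < ρ → ∀ u : ℝ × ℝ → Cn n, ContDiff ℝ ∞ u → Per u →
      (∀ p : ℝ × ℝ, |p.1| ≤ ρ + 1 → ‖u p‖ < ε) → 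
      ∃ c : Cn n, ‖c‖ ≤ ε ∧ 
        hatNorm 3 δ ρ (fun p => u p - c) (Icc (-ρ) ρ ×ˢ Icc (0:ℝ) 1) ^ 2 ≤ 8 * K * (C * 
          (16 * hatNorm 2 δ ρ (dbarJ J u) (Icc (-ρ - 1) (ρ + 1) ×ˢ Icc (0:ℝ) 1) ^ 2
            + 4 * sobNorm 2 (fun p => u p - c) (Icc (-ρ - 1) (-ρ) ×ˢ Icc (0:ℝ) 1) ^ 2
            + 4 * sobNorm 2 (fun p => u p - c) (Icc ρ (ρ + 1) ×ˢ Icc (0:ℝ) 1) ^ 2)) := by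
    refine ⟨((Q + 2 * (16 + 12 * K + 12 * K * Q)) + 2 * (16 + 12 * K + 12 * K * Q) 
        + (64 + 25 * K * (1 + 2 * (16 + 12 * K + 12 * K * Q)))
        + (64 + 25 * K * (1 + (64 + 25 * K * (1 + 2 * (16 + 12 * K + 12 * K * Q)))) + 
          K * (1 + 2 * (16 + 12 * K + 12 * K * Q)))), ?_, fun ρ hρ u us up hu => ?_⟩
    rotate_left
    · set c : Cn n := ∫ t in (0:ℝ)..1, u (0, t) with hcdef
      have hc : ‖c‖ ≤ ε := by
        have := intervalIntegral.norm_integral_le_of_norm_le_const (a := (0:ℝ)) (b := 1)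
          (f := fun t => u (0, t)) (C := ε) 
          (fun t _ => (hu (0, t) (by simp only [abs_zero]; linarith)).le)
        simpa using this
      obtain ⟨χ, χ1, w, w1, w2, T⟩ := hcut ρ hρ
      have S := mk_sys (Jstd_norm n) (Jstd_anti n) hJs hJ0 hL hb hρ ε0 a1 a4 us up hu hc
      have hm : ∫ t in (0:ℝ)..1, (u (0, t) - c) = 0 := by
        have hcont : Continuous (fun t : ℝ => u (0, t)) := us.continuous.comp (by fun_prop)
        rw [intervalIntegral.integral_sub (hcont.intervalIntegrable _ _) (by simp)]
        simp [hcdef]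
      obtain ⟨C, hC, main⟩ := core_est hK hρ k0 k1 k2 T S hm a5
      refine ⟨c, hc, ?_⟩
      have vs : ContDiff ℝ ∞ (fun p => u p - c) := us.sub contDiff_const
      have t1 := hat_le hK T vs
      have t2 := hat_ge (δ := δ) (ρ := ρ) hJs us
      have t3 := sob_ge (a := -ρ - 1) (b := -ρ) vs
      have t4 := sob_ge (a := ρ) (b := ρ + 1) vs
      have eCR : CR (fun p => J (u p)) (fun p => u p - c) = CR (fun p => J (u p)) u := by
        funext p; simp only [CR, DD_sub_const]
      rw [eCR] at main
      refine t1.trans (mul_le_mul_of_nonneg_left (main.trans ?_) (by linarith))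
      rw [hC]
      refine mul_le_mul_of_nonneg_left ?_ (by positivity)
      unfold EE
      linarith
    · positivity
  obtain ⟨C, C0, hC⟩ := hcore
  refine ⟨ε, ε0, 1 + 128 * K * C, by positivity, fun ρ hρ u us up hu _ => ?_⟩
  obtain ⟨c, hc, h⟩ := hC ρ hρ u us up hu
  refine ⟨c, hc, ?_⟩
  set x := hatNorm 2 δ ρ (dbarJ J u) (Icc (-ρ - 1) (ρ + 1) ×ˢ Icc (0:ℝ) 1)
  set y := sobNorm 2 (fun p => u p - c) (Icc (-ρ - 1) (-ρ) ×ˢ Icc (0:ℝ) 1)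
  set z := sobNorm 2 (fun p => u p - c) (Icc ρ (ρ + 1) ×ˢ Icc (0:ℝ) 1)
  have x0 : 0 ≤ x := Real.sqrt_nonneg _
  have y0 : 0 ≤ y := Real.sqrt_nonneg _
  have z0 : 0 ≤ z := Real.sqrt_nonneg _
  set M := 128 * K * C with hM
  have M0 : 0 ≤ M := by positivity
  refine le_of_sq_le_sq ?_ (by positivity)
  have s1 : x ^ 2 + y ^ 2 + z ^ 2 ≤ (x + y + z) ^ 2 := by nlinarith [mul_nonneg x0 y0, mul_nonneg x0 z0, mul_nonneg y0 z0]
  have s2 : 8 * K * (C * (16 * x ^ 2 + 4 * y ^ 2 + 4 * z ^ 2)) ≤ M * (x ^ 2 + y ^ 2 + z ^ 2) := by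
    have : 0 ≤ K * C * (y ^ 2 + z ^ 2) := by positivity
    rw [hM]; linarith
  have s3 : M * (x ^ 2 + y ^ 2 + z ^ 2) ≤ (1 + M) ^ 2 * (x + y + z) ^ 2 :=
    mul_le_mul (by nlinarith) s1 (by positivity) (by positivity)
  rw [mul_pow]
  linarith
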